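/- arXiv:2211.14754 — 2 statements merged into one kernel-verified Lean document; each statement's English description precedes it below -/
import Mathlib

section
/- Let A and B be Frobenius algebras over k graded by abelian groups F and G respectively, with comultiplications Δ_A and Δ_B graded maps of degrees d_A ∈ F and d_B ∈ G respectively, and let t : F⊗_ℤ G → k^× be a group homomorphism. Then the twisted tensor product A⊗^t B (with the induced Frobenius-candidate structure) is a Frobenius algebra if and only if t^{⟨|a| | |b|⟩} = t^{⟨|a|+d_A | |b|⟩} and t^{⟨|a| | |b|⟩} = t^{⟨|a| | |b|+d_B⟩} for all homogeneous a ∈ A and b ∈ B. -/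
open scoped TensorProduct

namespace TTP

section Defs

variable (k : Type*) [Field k]

section MidMap

variable {X P Q Y R S : Type*}
  [AddCommGroup X] [Module k X] [AddCommGroup P] [Module k P]
  [AddCommGroup Q] [Module k Q] [AddCommGroup Y] [Module k Y]
  [AddCommGroup R] [Module k R] [AddCommGroup S] [Module k S]

/-- The map `1_X ⊗ f ⊗ 1_Y` (with the canonical reassociations). -/
noncomputable def midMap (f : P ⊗[k] Q →ₗ[k] R ⊗[k] S) :
    (X ⊗[k] P) ⊗[k] (Q ⊗[k] Y) →ₗ[k] (X ⊗[k] R) ⊗[k] (S ⊗[k] Y) :=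
  (TensorProduct.assoc k (X ⊗[k] R) S Y).toLinearMap
    ∘ₗ TensorProduct.map (TensorProduct.assoc k X R S).symm.toLinearMap LinearMap.id
    ∘ₗ TensorProduct.map (TensorProduct.map LinearMap.id f) LinearMap.id
    ∘ₗ TensorProduct.map (TensorProduct.assoc k X P Q).toLinearMap LinearMap.id
    ∘ₗ (TensorProduct.assoc k (X ⊗[k] P) Q Y).symm.toLinearMap

end MidMap

variable {A B : Type*} [AddCommGroup A] [Module k A] [AddCommGroup B] [Module k B]

/-- `(A, mul, unit)` is a unital associative `k`-algebra (diagrammatically). -/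
def IsUnitalAssoc (mul : A ⊗[k] A →ₗ[k] A) (unit : k →ₗ[k] A) : Prop :=
  mul ∘ₗ TensorProduct.map unit LinearMap.id ∘ₗ (TensorProduct.lid k A).symm.toLinearMap
      = LinearMap.id
  ∧ mul ∘ₗ TensorProduct.map LinearMap.id unit ∘ₗ (TensorProduct.rid k A).symm.toLinearMap
      = LinearMap.id
  ∧ mul ∘ₗ TensorProduct.map mul LinearMap.id
      = mul ∘ₗ TensorProduct.map LinearMap.id mul ∘ₗ (TensorProduct.assoc k A A A).toLinearMap

/-- `(A, comul, counit)` is a counital coassociative `k`-coalgebra (diagrammatically). -/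
def IsCounitalCoassoc (comul : A →ₗ[k] A ⊗[k] A) (counit : A →ₗ[k] k) : Prop :=
  (TensorProduct.lid k A).toLinearMap ∘ₗ TensorProduct.map counit LinearMap.id ∘ₗ comul
      = LinearMap.id
  ∧ (TensorProduct.rid k A).toLinearMap ∘ₗ TensorProduct.map LinearMap.id counit ∘ₗ comul
      = LinearMap.id
  ∧ TensorProduct.map comul LinearMap.id ∘ₗ comul
      = (TensorProduct.assoc k A A A).symm.toLinearMap
          ∘ₗ TensorProduct.map LinearMap.id comul ∘ₗ comul

/-- `τ : B ⊗ A → A ⊗ B` is a twisting map for the algebras `A` and `B`: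
it is compatible with both units and with both multiplications. -/
def IsTwisting (mulA : A ⊗[k] A →ₗ[k] A) (unitA : k →ₗ[k] A)
    (mulB : B ⊗[k] B →ₗ[k] B) (unitB : k →ₗ[k] B)
    (τ : B ⊗[k] A →ₗ[k] A ⊗[k] B) : Prop :=
  τ ∘ₗ TensorProduct.map LinearMap.id unitA
      = TensorProduct.map unitA LinearMap.id ∘ₗ (TensorProduct.comm k B k).toLinearMap
  ∧ τ ∘ₗ TensorProduct.map unitB LinearMap.id
      = TensorProduct.map LinearMap.id unitB ∘ₗ (TensorProduct.comm k k A).toLinearMap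
  ∧ τ ∘ₗ TensorProduct.map mulB mulA
      = TensorProduct.map mulA mulB ∘ₗ midMap k τ ∘ₗ TensorProduct.map τ τ ∘ₗ midMap k τ

/-- The multiplication `(∇_A ⊗ ∇_B) ∘ (1 ⊗ τ ⊗ 1)` of the twisted tensor product. -/
noncomputable def tMul (mulA : A ⊗[k] A →ₗ[k] A) (mulB : B ⊗[k] B →ₗ[k] B)
    (τ : B ⊗[k] A →ₗ[k] A ⊗[k] B) :
    (A ⊗[k] B) ⊗[k] (A ⊗[k] B) →ₗ[k] A ⊗[k] B :=
  TensorProduct.map mulA mulB ∘ₗ midMap k τ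

/-- The unit `(η_A ⊗ η_B) ∘ (k ≅ k ⊗ k)` of the twisted tensor product. -/
noncomputable def tUnit (unitA : k →ₗ[k] A) (unitB : k →ₗ[k] B) : k →ₗ[k] A ⊗[k] B :=
  TensorProduct.map unitA unitB ∘ₗ (TensorProduct.lid k k).symm.toLinearMap

/-- The comultiplication `(1 ⊗ τ⁻¹ ⊗ 1) ∘ (Δ_A ⊗ Δ_B)` of the twisted tensor product. -/
noncomputable def tComul (comulA : A →ₗ[k] A ⊗[k] A) (comulB : B →ₗ[k] B ⊗[k] B)
    (τinv : A ⊗[k] B →ₗ[k] B ⊗[k] A) :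
    A ⊗[k] B →ₗ[k] (A ⊗[k] B) ⊗[k] (A ⊗[k] B) :=
  midMap k τinv ∘ₗ TensorProduct.map comulA comulB

/-- The counit `(k ⊗ k ≅ k) ∘ (ε_A ⊗ ε_B)` of the twisted tensor product. -/
noncomputable def tCounit (counitA : A →ₗ[k] k) (counitB : B →ₗ[k] k) :
    A ⊗[k] B →ₗ[k] k :=
  (TensorProduct.lid k k).toLinearMap ∘ₗ TensorProduct.map counitA counitB

/-- Compatibility of `τ` with the counits (diagram (5) of the paper). -/
def CounitCompat (counitA : A →ₗ[k] k) (counitB : B →ₗ[k] k)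
    (τ : B ⊗[k] A →ₗ[k] A ⊗[k] B) : Prop :=
  TensorProduct.map counitA LinearMap.id ∘ₗ τ
      = (TensorProduct.comm k B k).toLinearMap ∘ₗ TensorProduct.map LinearMap.id counitA
  ∧ TensorProduct.map LinearMap.id counitB ∘ₗ τ
      = (TensorProduct.comm k k A).toLinearMap ∘ₗ TensorProduct.map counitB LinearMap.id

/-- Compatibility of `τ` with the comultiplications (diagram (6) of the paper):
`(Δ_A ⊗ Δ_B)∘τ = (1⊗τ⊗1)∘(τ⊗τ)∘(1⊗τ⊗1)∘(Δ_B ⊗ Δ_A)`. -/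
def ComulCompat (comulA : A →ₗ[k] A ⊗[k] A) (comulB : B →ₗ[k] B ⊗[k] B)
    (τ : B ⊗[k] A →ₗ[k] A ⊗[k] B) : Prop :=
  TensorProduct.map comulA comulB ∘ₗ τ
      = midMap k τ ∘ₗ TensorProduct.map τ τ ∘ₗ midMap k τ ∘ₗ TensorProduct.map comulB comulA

/-- `(f ⊗ 1_B) ∘ τ = (1_A ⊗ τ) ∘ (τ ⊗ 1_A) ∘ (1_B ⊗ f)` for `f : A → A ⊗ A`. -/
def MidACompat (f : A →ₗ[k] A ⊗[k] A) (τ : B ⊗[k] A →ₗ[k] A ⊗[k] B) : Prop :=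
  TensorProduct.map f LinearMap.id ∘ₗ τ
    = (TensorProduct.assoc k A A B).symm.toLinearMap
      ∘ₗ TensorProduct.map LinearMap.id τ
      ∘ₗ (TensorProduct.assoc k A B A).toLinearMap
      ∘ₗ TensorProduct.map τ LinearMap.id
      ∘ₗ (TensorProduct.assoc k B A A).symm.toLinearMap
      ∘ₗ TensorProduct.map LinearMap.id f

/-- `(1_A ⊗ g) ∘ τ = (τ ⊗ 1_B) ∘ (1_B ⊗ τ) ∘ (g ⊗ 1_A)` for `g : B → B ⊗ B`. -/
def MidBCompat (g : B →ₗ[k] B ⊗[k] B) (τ : B ⊗[k] A →ₗ[k] A ⊗[k] B) : Prop :=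
  TensorProduct.map LinearMap.id g ∘ₗ τ
    = (TensorProduct.assoc k A B B).toLinearMap
      ∘ₗ TensorProduct.map τ LinearMap.id
      ∘ₗ (TensorProduct.assoc k B A B).symm.toLinearMap
      ∘ₗ TensorProduct.map LinearMap.id τ
      ∘ₗ (TensorProduct.assoc k B B A).toLinearMap
      ∘ₗ TensorProduct.map g LinearMap.id

/-- `(A, mul, unit, comul, counit)` is a Frobenius algebra (diagrammatically). -/
def IsFrobenius (mul : A ⊗[k] A →ₗ[k] A) (unit : k →ₗ[k] A)
    (comul : A →ₗ[k] A ⊗[k] A) (counit : A →ₗ[k] k) : Prop :=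
  IsUnitalAssoc k mul unit
  ∧ IsCounitalCoassoc k comul counit
  ∧ comul ∘ₗ mul
      = TensorProduct.map LinearMap.id mul ∘ₗ (TensorProduct.assoc k A A A).toLinearMap
          ∘ₗ TensorProduct.map comul LinearMap.id
  ∧ comul ∘ₗ mul
      = TensorProduct.map mul LinearMap.id ∘ₗ (TensorProduct.assoc k A A A).symm.toLinearMap
          ∘ₗ TensorProduct.map LinearMap.id comul

/-- `(A, mul, unit, comul, counit)` is a bialgebra (diagrammatically). -/
def IsBialgebra (mul : A ⊗[k] A →ₗ[k] A) (unit : k →ₗ[k] A)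
    (comul : A →ₗ[k] A ⊗[k] A) (counit : A →ₗ[k] k) : Prop :=
  IsUnitalAssoc k mul unit
  ∧ IsCounitalCoassoc k comul counit
  ∧ counit ∘ₗ mul = (TensorProduct.lid k k).toLinearMap ∘ₗ TensorProduct.map counit counit
  ∧ comul ∘ₗ unit = TensorProduct.map unit unit ∘ₗ (TensorProduct.lid k k).symm.toLinearMap
  ∧ counit ∘ₗ unit = LinearMap.id
  ∧ comul ∘ₗ mul
      = TensorProduct.map mul mul ∘ₗ midMap k (TensorProduct.comm k A A).toLinearMap
          ∘ₗ TensorProduct.map comul comul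

/-- `(A, mul, unit, comul, counit)` is a Hopf algebra: a bialgebra with an antipode. -/
def IsHopf (mul : A ⊗[k] A →ₗ[k] A) (unit : k →ₗ[k] A)
    (comul : A →ₗ[k] A ⊗[k] A) (counit : A →ₗ[k] k) : Prop :=
  IsBialgebra k mul unit comul counit
  ∧ ∃ S : A →ₗ[k] A,
      mul ∘ₗ TensorProduct.map S LinearMap.id ∘ₗ comul = unit ∘ₗ counit
      ∧ mul ∘ₗ TensorProduct.map LinearMap.id S ∘ₗ comul = unit ∘ₗ counit

/-- `Γ` is a right inverse of the multiplication which is a bimodule morphism,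
witnessing separability of the algebra. -/
def IsSeparableWith (mul : A ⊗[k] A →ₗ[k] A) (Γ : A →ₗ[k] A ⊗[k] A) : Prop :=
  mul ∘ₗ Γ = LinearMap.id
  ∧ Γ ∘ₗ mul ∘ₗ TensorProduct.map LinearMap.id mul
      = TensorProduct.map mul mul
          ∘ₗ (TensorProduct.assoc k A A (A ⊗[k] A)).symm.toLinearMap
          ∘ₗ TensorProduct.map LinearMap.id (TensorProduct.assoc k A A A).toLinearMap
          ∘ₗ TensorProduct.map LinearMap.id (TensorProduct.map Γ LinearMap.id)

/-- The pairing `β` is associative: `β∘(1⊗∇) = β∘(∇⊗1)`. -/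
def PairingAssoc (mul : A ⊗[k] A →ₗ[k] A) (β : A ⊗[k] A →ₗ[k] k) : Prop :=
  β ∘ₗ TensorProduct.map LinearMap.id mul ∘ₗ (TensorProduct.assoc k A A A).toLinearMap
    = β ∘ₗ TensorProduct.map mul LinearMap.id

/-- The pairing `β` is non-degenerate with co-pairing `α`:
`(1⊗β)∘(α⊗1) = 1_A` under the canonical isomorphisms. -/
def PairingNondeg (β : A ⊗[k] A →ₗ[k] k) (α : k →ₗ[k] A ⊗[k] A) : Prop :=
  (TensorProduct.rid k A).toLinearMap
      ∘ₗ TensorProduct.map LinearMap.id β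
      ∘ₗ (TensorProduct.assoc k A A A).toLinearMap
      ∘ₗ TensorProduct.map α LinearMap.id
      ∘ₗ (TensorProduct.lid k A).symm.toLinearMap = LinearMap.id

/-- The pairing `β` is symmetric: `β ∘ σ = β` for the flip `σ`. -/
def PairingSymm (β : A ⊗[k] A →ₗ[k] k) : Prop :=
  β ∘ₗ (TensorProduct.comm k A A).toLinearMap = β

end Defs

end TTP

namespace TTP

variable (k : Type*) [Field k]

/-- `f : V → V ⊗ V` is a graded map of degree `d`: it sends the homogeneous
component of degree `x` into the span of the homogeneous components
`V_{x₁} ⊗ V_{x₂}` with `x₁ + x₂ = x + d`. -/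
def ComulGradedOfDegree {V F : Type*} [AddCommGroup V] [Module k V] [AddCommGroup F]
    (𝒱 : F → Submodule k V) (f : V →ₗ[k] V ⊗[k] V) (d : F) : Prop :=
  ∀ x : F, ∀ v ∈ 𝒱 x, f v ∈
    ⨆ (p : F × F) (_ : p.1 + p.2 = x + d),
      LinearMap.range (TensorProduct.map (𝒱 p.1).subtype (𝒱 p.2).subtype)

end TTP

/-!
For `a` homogeneous of degree `f`, the twist sends `b ⊗ a` to `a ⊗ σ b`, where `σ` scales the
component of degree `g` of `B` by `χ_f(g) = t^{⟨f|g⟩}`; for `b` homogeneous of degree `g` it sends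
`b ⊗ a` to `ρ a ⊗ b`, where `ρ` scales `A` by `χ^g = t^{⟨-|g⟩}`. As `χ_f` is a character and `Δ_B`
has degree `d_B`, `(σ ⊗ σ) ∘ Δ_B = χ_f(d_B) • Δ_B ∘ σ`, and likewise for `ρ` and `Δ_A`. The algebra
laws of `A ⊗^t B` hold because the twist is a twisting map; each Frobenius or counit law, evaluated
at `a ⊗ b`, holds up to exactly one of the factors `χ_f(d_B) = t^{⟨f|d_B⟩}` and
`χ^g(d_A) = t^{⟨d_A|g⟩}`. The counit laws at nonzero `a ⊗ b` force both
factors to be `1`. Conversely, if they are `1` these laws hold on the nose, and coassociativity is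
a consequence of the Frobenius laws and the unit.
-/

namespace TTP

open TensorProduct

theorem tmul_ne_zero {R V W : Type*} [CommSemiring R] [NoZeroDivisors R] [AddCommMonoid V]
    [Module R V] [AddCommMonoid W] [Module R W] [Module.Projective R V] [Module.Projective R W]
    {v : V} {w : W} (hv : v ≠ 0) (hw : w ≠ 0) : v ⊗ₜ[R] w ≠ 0 := by
  obtain ⟨φ, hφ⟩ := Module.Projective.exists_dual_ne_zero R hv
  obtain ⟨ψ, hψ⟩ := Module.Projective.exists_dual_ne_zero R hw
  intro hzero
  have hprod : φ v * ψ w = 0 := by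
    simpa using congrArg (LinearMap.mul' R R ∘ₗ TensorProduct.map φ ψ) hzero
  exact mul_ne_zero hφ hψ hprod

section Homogeneous

variable {R V W ι κ X : Type*} [CommSemiring R] [AddCommMonoid V] [Module R V]
  [AddCommMonoid W] [Module R W] [AddCommMonoid X] [Module R X] [DecidableEq ι] [DecidableEq κ]
  (𝒱 : ι → Submodule R V) [DirectSum.Decomposition 𝒱]
  (𝒲 : κ → Submodule R W) [DirectSum.Decomposition 𝒲]

theorem linearMap_ext_of_homogeneous {φ ψ : V →ₗ[R] X}
    (h : ∀ i, ∀ v ∈ 𝒱 i, v ≠ 0 → φ v = ψ v) : φ = ψ := by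
  refine DirectSum.decompose_lhom_ext 𝒱 fun i => LinearMap.ext fun v => ?_
  by_cases hv : (v : V) = 0
  · simp [hv]
  · exact h i v v.2 hv

theorem tensorProduct_ext_of_homogeneous {φ ψ : V ⊗[R] W →ₗ[R] X}
    (h : ∀ i j, ∀ v ∈ 𝒱 i, ∀ w ∈ 𝒲 j, v ≠ 0 → w ≠ 0 → φ (v ⊗ₜ w) = ψ (v ⊗ₜ w)) : φ = ψ :=
  TensorProduct.ext <| linearMap_ext_of_homogeneous 𝒱 fun i v hv hv0 =>
    linearMap_ext_of_homogeneous 𝒲 fun j w hw hw0 => h i j v hv w hw hv0 hw0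

/-- The linear endomorphism of a graded module that scales the component of degree `i` by `χ i`;
for a fixed homogeneous factor, the twist by a bicharacter acts on the other factor this way. -/
noncomputable def gradedScale (χ : ι → R) : V →ₗ[R] V :=
  DirectSum.toModule R ι V (fun i => χ i • (𝒱 i).subtype) ∘ₗ
    (DirectSum.decomposeLinearEquiv 𝒱).toLinearMap

variable {𝒱} in
theorem gradedScale_of_mem (χ : ι → R) {i : ι} {v : V} (hv : v ∈ 𝒱 i) :
    gradedScale 𝒱 χ v = χ i • v := by
  lift v to 𝒱 i using hv
  simp [gradedScale]

end Homogeneous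

section GradedComul

variable {k V F : Type*} [Field k] [AddCommGroup V] [Module k V] [AddCommGroup F]
  {𝒱 : F → Submodule k V} {f : V →ₗ[k] V ⊗[k] V} {d : F}

theorem ComulGradedOfDegree.eq_of_homogeneous {W : Type*} [AddCommGroup W] [Module k W]
    (hf : ComulGradedOfDegree k 𝒱 f d) {x : F} {v : V} (hv : v ∈ 𝒱 x) {φ ψ : V ⊗[k] V →ₗ[k] W}
    (h : ∀ p q, p + q = x + d → ∀ y ∈ 𝒱 p, ∀ z ∈ 𝒱 q, φ (y ⊗ₜ z) = ψ (y ⊗ₜ z)) :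
    φ (f v) = ψ (f v) := by
  suffices hle : (⨆ (p : F × F) (_ : p.1 + p.2 = x + d),
      LinearMap.range (TensorProduct.map (𝒱 p.1).subtype (𝒱 p.2).subtype)) ≤
      LinearMap.eqLocus φ ψ from hle (hf x v hv)
  refine iSup₂_le fun p hp => LinearMap.range_le_iff_comap.2 (eq_top_iff.2 fun z _ => ?_)
  have hcomp : φ ∘ₗ TensorProduct.map (𝒱 p.1).subtype (𝒱 p.2).subtype =
      ψ ∘ₗ TensorProduct.map (𝒱 p.1).subtype (𝒱 p.2).subtype :=
    TensorProduct.ext' fun y z => h p.1 p.2 hp y y.2 z z.2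
  exact LinearMap.congr_fun hcomp z

theorem ComulGradedOfDegree.map_gradedScale_comp [DecidableEq F] [DirectSum.Decomposition 𝒱]
    (hf : ComulGradedOfDegree k 𝒱 f d) (χ : AddChar F k) :
    TensorProduct.map (gradedScale 𝒱 χ) (gradedScale 𝒱 χ) ∘ₗ f =
      χ d • f ∘ₗ gradedScale 𝒱 χ := by
  refine linearMap_ext_of_homogeneous 𝒱 fun x v hv _ => ?_
  have hscale : TensorProduct.map (gradedScale 𝒱 χ) (gradedScale 𝒱 χ) (f v) =
      (χ (x + d) • LinearMap.id (R := k)) (f v) := by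
    refine hf.eq_of_homogeneous hv fun p q hpq y hy z hz => ?_
    simp only [map_tmul, gradedScale_of_mem χ hy, gradedScale_of_mem χ hz, LinearMap.smul_apply,
      LinearMap.id_apply, smul_tmul_smul, ← χ.map_add_eq_mul, hpq]
  simp only [LinearMap.comp_apply, hscale, LinearMap.smul_apply, LinearMap.id_apply,
    gradedScale_of_mem χ hv, map_smul, smul_smul, χ.map_add_eq_mul, mul_comm]

end GradedComul

section Multiplication

variable {R V : Type*} [CommSemiring R] [AddCommMonoid V] [Module R V]

/-- Left multiplication `L_x : y ↦ x y` for the multiplication `mul`, linear in `x`. -/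
noncomputable def leftMul (mul : V ⊗[R] V →ₗ[R] V) : V →ₗ[R] V →ₗ[R] V :=
  TensorProduct.curry mul

/-- Right multiplication `R_y : x ↦ x y` for the multiplication `mul`, linear in `y`. -/
noncomputable def rightMul (mul : V ⊗[R] V →ₗ[R] V) : V →ₗ[R] V →ₗ[R] V :=
  (TensorProduct.curry mul).flip

@[simp]
theorem leftMul_apply (mul : V ⊗[R] V →ₗ[R] V) (x y : V) : leftMul mul x y = mul (x ⊗ₜ y) := rfl

@[simp]
theorem rightMul_apply (mul : V ⊗[R] V →ₗ[R] V) (x y : V) : rightMul mul y x = mul (x ⊗ₜ y) := rfl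

variable {mul : V ⊗[R] V →ₗ[R] V} {comul : V →ₗ[R] V ⊗[R] V}

theorem comul_comp_mul_eq_map_id_mul_iff :
    comul ∘ₗ mul = TensorProduct.map LinearMap.id mul ∘ₗ
        (TensorProduct.assoc R V V V).toLinearMap ∘ₗ TensorProduct.map comul LinearMap.id ↔
      ∀ y, comul ∘ₗ rightMul mul y = (rightMul mul y).lTensor V ∘ₗ comul := by
  have hassoc (z : V ⊗[R] V) (y : V) : TensorProduct.map LinearMap.id mul
      (TensorProduct.assoc R V V V (z ⊗ₜ y)) = (rightMul mul y).lTensor V z := by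
    induction z with
    | zero => simp
    | add z z' hz hz' => simp only [add_tmul, map_add, hz, hz']
    | tmul p q => simp
  refine ⟨fun h y => LinearMap.ext fun x => ?_, fun h => TensorProduct.ext' fun x y => ?_⟩
  · simpa [hassoc] using LinearMap.congr_fun h (x ⊗ₜ y)
  · simpa [hassoc] using LinearMap.congr_fun (h y) x

theorem comul_comp_mul_eq_map_mul_id_iff :
    comul ∘ₗ mul = TensorProduct.map mul LinearMap.id ∘ₗ
        (TensorProduct.assoc R V V V).symm.toLinearMap ∘ₗ TensorProduct.map LinearMap.id comul ↔
      ∀ x, comul ∘ₗ leftMul mul x = (leftMul mul x).rTensor V ∘ₗ comul := by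
  have hassoc (x : V) (z : V ⊗[R] V) : TensorProduct.map mul LinearMap.id
      ((TensorProduct.assoc R V V V).symm (x ⊗ₜ z)) = (leftMul mul x).rTensor V z := by
    induction z with
    | zero => simp
    | add z z' hz hz' => simp only [tmul_add, map_add, hz, hz']
    | tmul p q => simp
  refine ⟨fun h x => LinearMap.ext fun y => ?_, fun h => TensorProduct.ext' fun x y => ?_⟩
  · simpa [hassoc] using LinearMap.congr_fun h (x ⊗ₜ y)
  · simpa [hassoc] using LinearMap.congr_fun (h x) y

/-- Writing `Δ 1 = ∑ e ⊗ f`, both sides send `x` to `∑ (1 ⊗ R_e) (Δ x) ⊗ f`. -/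
theorem coassoc_of_frobenius_law {one : V} (hone : ∀ x, mul (x ⊗ₜ one) = x)
    (hright : ∀ y, comul ∘ₗ rightMul mul y = (rightMul mul y).lTensor V ∘ₗ comul)
    (hleft : ∀ x, comul ∘ₗ leftMul mul x = (leftMul mul x).rTensor V ∘ₗ comul) :
    TensorProduct.map comul LinearMap.id ∘ₗ comul =
      (TensorProduct.assoc R V V V).symm.toLinearMap ∘ₗ
        TensorProduct.map LinearMap.id comul ∘ₗ comul := by
  let G : V ⊗[R] V →ₗ[R] V →ₗ[R] V ⊗[R] V :=
    (LinearMap.rTensorHom V ∘ₗ leftMul mul).flip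
  have hG_apply (z : V ⊗[R] V) (x : V) : G z x = (leftMul mul x).rTensor V z := rfl
  have hG : G (comul one) = comul := LinearMap.ext fun x => by
    simpa [hG_apply, hone] using (LinearMap.congr_fun (hleft x) one).symm
  have hmove (w : V ⊗[R] V) (e f : V) : (rightMul mul e).lTensor V w ⊗ₜ[R] f =
      (TensorProduct.assoc R V V V).symm ((G (e ⊗ₜ f)).lTensor V w) := by
    induction w with
    | zero => simp
    | add w w' hw hw' => simp only [add_tmul, map_add, hw, hw']
    | tmul p q => simp [hG_apply]
  have hcoassoc (z : V ⊗[R] V) (x : V) : comul.rTensor V (G z x) =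
      (TensorProduct.assoc R V V V).symm ((G z).lTensor V (comul x)) := by
    induction z with
    | zero => simp
    | add z z' hz hz' =>
      simp only [map_add, LinearMap.add_apply, LinearMap.lTensor_add, hz, hz']
    | tmul e f =>
      have hright_apply : comul (mul (x ⊗ₜ e)) = (rightMul mul e).lTensor V (comul x) :=
        LinearMap.congr_fun (hright e) x
      rw [← hmove, ← hright_apply]
      rfl
  refine LinearMap.ext fun x => ?_
  have hone_coassoc := hcoassoc (comul one) x
  rw [hG] at hone_coassoc
  exact hone_coassoc

end Multiplication

section Frobenius

variable {k V : Type*} [Field k] [AddCommGroup V] [Module k V]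
  {mul : V ⊗[k] V →ₗ[k] V} {unit : k →ₗ[k] V} {comul : V →ₗ[k] V ⊗[k] V} {counit : V →ₗ[k] k}

theorem IsUnitalAssoc.one_mul (h : IsUnitalAssoc k mul unit) (x : V) :
    mul (unit 1 ⊗ₜ x) = x := by
  simpa using LinearMap.congr_fun h.1 x

theorem IsUnitalAssoc.mul_one (h : IsUnitalAssoc k mul unit) (x : V) :
    mul (x ⊗ₜ unit 1) = x := by
  simpa using LinearMap.congr_fun h.2.1 x

theorem IsUnitalAssoc.leftMul_one (h : IsUnitalAssoc k mul unit) :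
    leftMul mul (unit 1) = LinearMap.id :=
  LinearMap.ext h.one_mul

theorem IsUnitalAssoc.rightMul_one (h : IsUnitalAssoc k mul unit) :
    rightMul mul (unit 1) = LinearMap.id :=
  LinearMap.ext h.mul_one

theorem IsUnitalAssoc.mul_assoc (h : IsUnitalAssoc k mul unit) (x y z : V) :
    mul (mul (x ⊗ₜ y) ⊗ₜ z) = mul (x ⊗ₜ mul (y ⊗ₜ z)) := by
  simpa using LinearMap.congr_fun h.2.2 ((x ⊗ₜ y) ⊗ₜ z)

theorem isFrobenius_iff : IsFrobenius k mul unit comul counit ↔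
    IsUnitalAssoc k mul unit ∧
      (TensorProduct.lid k V).toLinearMap ∘ₗ counit.rTensor V ∘ₗ comul = LinearMap.id ∧
      (TensorProduct.rid k V).toLinearMap ∘ₗ counit.lTensor V ∘ₗ comul = LinearMap.id ∧
      (∀ y, comul ∘ₗ rightMul mul y = (rightMul mul y).lTensor V ∘ₗ comul) ∧
      ∀ x, comul ∘ₗ leftMul mul x = (leftMul mul x).rTensor V ∘ₗ comul := by
  rw [← comul_comp_mul_eq_map_id_mul_iff, ← comul_comp_mul_eq_map_mul_id_iff]
  refine ⟨fun ⟨halg, ⟨hl, hr, _⟩, hfrob⟩ => ⟨halg, hl, hr, hfrob⟩,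
    fun ⟨halg, hl, hr, hfrob⟩ => ⟨halg, ⟨hl, hr, ?_⟩, hfrob⟩⟩
  exact coassoc_of_frobenius_law halg.mul_one (comul_comp_mul_eq_map_id_mul_iff.1 hfrob.1)
    (comul_comp_mul_eq_map_mul_id_iff.1 hfrob.2)

end Frobenius

section MidMap

variable {k X P Q Y R S : Type*} [Field k]
  [AddCommGroup X] [Module k X] [AddCommGroup P] [Module k P]
  [AddCommGroup Q] [Module k Q] [AddCommGroup Y] [Module k Y]
  [AddCommGroup R] [Module k R] [AddCommGroup S] [Module k S]

theorem midMap_tmul (f : P ⊗[k] Q →ₗ[k] R ⊗[k] S) (x : X) (p : P) (q : Q) (y : Y) :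
    midMap k f ((x ⊗ₜ p) ⊗ₜ (q ⊗ₜ y)) =
      TensorProduct.map (TensorProduct.mk k X R x) ((TensorProduct.mk k S Y).flip y)
        (f (p ⊗ₜ q)) := by
  simp only [midMap, LinearMap.comp_apply, LinearEquiv.coe_coe, assoc_symm_tmul, map_tmul,
    assoc_tmul, LinearMap.id_apply]
  generalize f (p ⊗ₜ q) = z
  induction z with
  | zero => simp
  | add z z' hz hz' => simp only [tmul_add, add_tmul, map_add, hz, hz']
  | tmul r s => simp

theorem midMap_comp_map {X' P' Q' Y' R' S' : Type*}
    [AddCommGroup X'] [Module k X'] [AddCommGroup P'] [Module k P']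
    [AddCommGroup Q'] [Module k Q'] [AddCommGroup Y'] [Module k Y']
    [AddCommGroup R'] [Module k R'] [AddCommGroup S'] [Module k S']
    {f : P ⊗[k] Q →ₗ[k] R ⊗[k] S} {f' : P' ⊗[k] Q' →ₗ[k] R' ⊗[k] S'}
    {p : P →ₗ[k] P'} {q : Q →ₗ[k] Q'} {r : R →ₗ[k] R'} {s : S →ₗ[k] S'}
    (h : f' ∘ₗ TensorProduct.map p q = TensorProduct.map r s ∘ₗ f)
    (x : X →ₗ[k] X') (y : Y →ₗ[k] Y') :
    midMap k f' ∘ₗ TensorProduct.map (TensorProduct.map x p) (TensorProduct.map q y) =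
      TensorProduct.map (TensorProduct.map x r) (TensorProduct.map s y) ∘ₗ midMap k f := by
  refine TensorProduct.ext_fourfold' fun x₀ p₀ q₀ y₀ => ?_
  have h₀ : f' (p p₀ ⊗ₜ q q₀) = TensorProduct.map r s (f (p₀ ⊗ₜ q₀)) :=
    LinearMap.congr_fun h (p₀ ⊗ₜ q₀)
  simp only [LinearMap.comp_apply, map_tmul, midMap_tmul, h₀, TensorProduct.map_map]
  rfl

end MidMap

section Twist

variable {k A B : Type*} [Field k] [AddCommGroup A] [Module k A] [AddCommGroup B] [Module k B]
  {mulA : A ⊗[k] A →ₗ[k] A} {unitA : k →ₗ[k] A}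
  {comulA : A →ₗ[k] A ⊗[k] A} {counitA : A →ₗ[k] k}
  {mulB : B ⊗[k] B →ₗ[k] B} {unitB : k →ₗ[k] B}
  {comulB : B →ₗ[k] B ⊗[k] B} {counitB : B →ₗ[k] k}

section Algebra

variable {τ : B ⊗[k] A →ₗ[k] A ⊗[k] B}

theorem tMul_tmul (a a' : A) (b b' : B) :
    tMul k mulA mulB τ ((a ⊗ₜ b) ⊗ₜ (a' ⊗ₜ b')) =
      TensorProduct.map (leftMul mulA a) (rightMul mulB b') (τ (b ⊗ₜ a')) := by
  simp only [tMul, LinearMap.comp_apply, midMap_tmul, TensorProduct.map_map]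
  rfl

theorem tMul_rTensor_leftMul_tmul (hA : IsUnitalAssoc k mulA unitA) (a : A) (z w : A ⊗[k] B) :
    tMul k mulA mulB τ ((leftMul mulA a).rTensor B z ⊗ₜ w) =
      (leftMul mulA a).rTensor B (tMul k mulA mulB τ (z ⊗ₜ w)) := by
  have hcomp (x : A) : leftMul mulA (mulA (a ⊗ₜ x)) = leftMul mulA a ∘ₗ leftMul mulA x :=
    LinearMap.ext (hA.mul_assoc a x)
  induction z with
  | zero => simp
  | add z z' hz hz' => simp only [add_tmul, map_add, hz, hz']
  | tmul x y =>
    induction w with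
    | zero => simp
    | add w w' hw hw' => simp only [tmul_add, map_add, hw, hw']
    | tmul x' y' =>
      rw [LinearMap.rTensor_tmul, tMul_tmul, tMul_tmul, leftMul_apply, hcomp,
        ← LinearMap.rTensor_comp_map, LinearMap.comp_apply]

theorem tMul_tmul_lTensor_rightMul (hB : IsUnitalAssoc k mulB unitB) (b : B) (z w : A ⊗[k] B) :
    tMul k mulA mulB τ (z ⊗ₜ (rightMul mulB b).lTensor A w) =
      (rightMul mulB b).lTensor A (tMul k mulA mulB τ (z ⊗ₜ w)) := by
  have hcomp (y : B) : rightMul mulB (mulB (y ⊗ₜ b)) = rightMul mulB b ∘ₗ rightMul mulB y :=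
    LinearMap.ext fun x => (hB.mul_assoc x y b).symm
  induction z with
  | zero => simp
  | add z z' hz hz' => simp only [add_tmul, map_add, hz, hz']
  | tmul x y =>
    induction w with
    | zero => simp
    | add w w' hw hw' => simp only [tmul_add, map_add, hw, hw']
    | tmul x' y' =>
      rw [LinearMap.lTensor_tmul, tMul_tmul, tMul_tmul, rightMul_apply, hcomp,
        ← LinearMap.lTensor_comp_map, LinearMap.comp_apply]

theorem tMul_tmul_tmul_one (hB : IsUnitalAssoc k mulB unitB) (a a' : A) (b : B) :
    tMul k mulA mulB τ ((a ⊗ₜ b) ⊗ₜ (a' ⊗ₜ unitB 1)) =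
      (leftMul mulA a).rTensor B (τ (b ⊗ₜ a')) := by
  rw [tMul_tmul, hB.rightMul_one, LinearMap.rTensor]

theorem tMul_one_tmul_tmul (hA : IsUnitalAssoc k mulA unitA) (b b' : B) (a' : A) :
    tMul k mulA mulB τ ((unitA 1 ⊗ₜ b) ⊗ₜ (a' ⊗ₜ b')) =
      (rightMul mulB b').lTensor A (τ (b ⊗ₜ a')) := by
  rw [tMul_tmul, hA.leftMul_one, LinearMap.lTensor]

theorem IsTwisting.apply_tmul_one (hτ : IsTwisting k mulA unitA mulB unitB τ) (b : B) :
    τ (b ⊗ₜ unitA 1) = unitA 1 ⊗ₜ b := by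
  simpa using LinearMap.congr_fun hτ.1 (b ⊗ₜ 1)

theorem IsTwisting.apply_one_tmul (hτ : IsTwisting k mulA unitA mulB unitB τ) (a : A) :
    τ (unitB 1 ⊗ₜ a) = a ⊗ₜ unitB 1 := by
  simpa using LinearMap.congr_fun hτ.2.1 (1 ⊗ₜ a)

theorem IsTwisting.apply_tmul_mul (hτ : IsTwisting k mulA unitA mulB unitB τ)
    (hB : IsUnitalAssoc k mulB unitB) (b : B) (a a' : A) :
    τ (b ⊗ₜ mulA (a ⊗ₜ a')) = tMul k mulA mulB τ (τ (b ⊗ₜ a) ⊗ₜ (a' ⊗ₜ unitB 1)) := by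
  simpa [tMul, midMap_tmul, hB.mul_one, hτ.apply_one_tmul] using
    LinearMap.congr_fun hτ.2.2 ((b ⊗ₜ unitB 1) ⊗ₜ (a ⊗ₜ a'))

theorem IsTwisting.apply_mul_tmul (hτ : IsTwisting k mulA unitA mulB unitB τ)
    (hA : IsUnitalAssoc k mulA unitA) (b b' : B) (a : A) :
    τ (mulB (b ⊗ₜ b') ⊗ₜ a) = tMul k mulA mulB τ ((unitA 1 ⊗ₜ b) ⊗ₜ τ (b' ⊗ₜ a)) := by
  simpa [tMul, midMap_tmul, hA.one_mul, hτ.apply_tmul_one] using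
    LinearMap.congr_fun hτ.2.2 ((b ⊗ₜ b') ⊗ₜ (unitA 1 ⊗ₜ a))

theorem IsTwisting.tMul_lTensor_rightMul_tmul (hτ : IsTwisting k mulA unitA mulB unitB τ)
    (hA : IsUnitalAssoc k mulA unitA) (hB : IsUnitalAssoc k mulB unitB)
    (z : A ⊗[k] B) (b : B) (a : A) :
    tMul k mulA mulB τ ((rightMul mulB b).lTensor A z ⊗ₜ (a ⊗ₜ unitB 1)) =
      tMul k mulA mulB τ (z ⊗ₜ τ (b ⊗ₜ a)) := by
  induction z with
  | zero => simp
  | add z z' hz hz' => simp only [add_tmul, map_add, hz, hz']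
  | tmul x y =>
    rw [LinearMap.lTensor_tmul, tMul_tmul_tmul_one hB, rightMul_apply, hτ.apply_mul_tmul hA,
      ← tMul_rTensor_leftMul_tmul hA, LinearMap.rTensor_tmul, leftMul_apply, hA.mul_one]

theorem IsTwisting.tMul_tmul_rTensor_leftMul (hτ : IsTwisting k mulA unitA mulB unitB τ)
    (hA : IsUnitalAssoc k mulA unitA) (hB : IsUnitalAssoc k mulB unitB)
    (b : B) (a : A) (w : A ⊗[k] B) :
    tMul k mulA mulB τ ((unitA 1 ⊗ₜ b) ⊗ₜ (leftMul mulA a).rTensor B w) =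
      tMul k mulA mulB τ (τ (b ⊗ₜ a) ⊗ₜ w) := by
  induction w with
  | zero => simp
  | add w w' hw hw' => simp only [tmul_add, map_add, hw, hw']
  | tmul x y =>
    rw [LinearMap.rTensor_tmul, tMul_one_tmul_tmul hA, leftMul_apply, hτ.apply_tmul_mul hB,
      ← tMul_tmul_lTensor_rightMul hB, LinearMap.lTensor_tmul, rightMul_apply, hB.one_mul]

theorem IsTwisting.tMul_assoc (hτ : IsTwisting k mulA unitA mulB unitB τ)
    (hA : IsUnitalAssoc k mulA unitA) (hB : IsUnitalAssoc k mulB unitB)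
    (a a' a'' : A) (b b' b'' : B) :
    tMul k mulA mulB τ (tMul k mulA mulB τ ((a ⊗ₜ b) ⊗ₜ (a' ⊗ₜ b')) ⊗ₜ (a'' ⊗ₜ b'')) =
      tMul k mulA mulB τ ((a ⊗ₜ b) ⊗ₜ tMul k mulA mulB τ ((a' ⊗ₜ b') ⊗ₜ (a'' ⊗ₜ b''))) := by
  have ha : (a ⊗ₜ b : A ⊗[k] B) = (leftMul mulA a).rTensor B (unitA 1 ⊗ₜ b) := by
    rw [LinearMap.rTensor_tmul, leftMul_apply, hA.mul_one]
  have hb : (a'' ⊗ₜ b'' : A ⊗[k] B) = (rightMul mulB b'').lTensor A (a'' ⊗ₜ unitB 1) := by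
    rw [LinearMap.lTensor_tmul, rightMul_apply, hB.one_mul]
  simp only [ha, hb, tMul_rTensor_leftMul_tmul hA, tMul_tmul_lTensor_rightMul hB]
  rw [tMul_one_tmul_tmul hA, hτ.tMul_lTensor_rightMul_tmul hA hB, tMul_tmul_tmul_one hB,
    hτ.tMul_tmul_rTensor_leftMul hA hB]

theorem IsTwisting.isUnitalAssoc_tMul (hτ : IsTwisting k mulA unitA mulB unitB τ)
    (hA : IsUnitalAssoc k mulA unitA) (hB : IsUnitalAssoc k mulB unitB) :
    IsUnitalAssoc k (tMul k mulA mulB τ) (tUnit k unitA unitB) := by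
  refine ⟨TensorProduct.ext' fun a b => ?_, TensorProduct.ext' fun a b => ?_,
    TensorProduct.ext <| TensorProduct.ext_fourfold' fun a b a' b' =>
      TensorProduct.ext' fun a'' b'' => hτ.tMul_assoc hA hB a a' a'' b b' b''⟩
  · simp [tUnit, tMul_one_tmul_tmul hA, hτ.apply_one_tmul, hB.one_mul]
  · simp [tUnit, tMul_tmul_tmul_one hB, hτ.apply_tmul_one, hA.mul_one]

theorem rightMul_tMul_tmul {σ : B →ₗ[k] B} {a : A} (hσ : ∀ y, τ (y ⊗ₜ a) = a ⊗ₜ σ y) (b : B) :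
    rightMul (tMul k mulA mulB τ) (a ⊗ₜ b) =
      TensorProduct.map (rightMul mulA a) (rightMul mulB b ∘ₗ σ) :=
  TensorProduct.ext' fun x y => by simp [tMul_tmul, hσ]

theorem leftMul_tMul_tmul {ρ : A →ₗ[k] A} {b : B} (hρ : ∀ x, τ (b ⊗ₜ x) = ρ x ⊗ₜ b) (a : A) :
    leftMul (tMul k mulA mulB τ) (a ⊗ₜ b) =
      TensorProduct.map (leftMul mulA a ∘ₗ ρ) (leftMul mulB b) :=
  TensorProduct.ext' fun x y => by simp [tMul_tmul, hρ]

theorem IsTwisting.comp_lTensor_rightMul (hτ : IsTwisting k mulA unitA mulB unitB τ)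
    (hB : IsUnitalAssoc k mulB unitB) {σ : B →ₗ[k] B} {a : A}
    (hσ : ∀ y, τ (y ⊗ₜ a) = a ⊗ₜ σ y) :
    τ ∘ₗ (rightMul mulA a).lTensor B = TensorProduct.map (rightMul mulA a) σ ∘ₗ τ := by
  refine TensorProduct.ext' fun b x => ?_
  calc τ (b ⊗ₜ mulA (x ⊗ₜ a))
      = rightMul (tMul k mulA mulB τ) (a ⊗ₜ unitB 1) (τ (b ⊗ₜ x)) := hτ.apply_tmul_mul hB b x a
    _ = TensorProduct.map (rightMul mulA a) σ (τ (b ⊗ₜ x)) := by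
        rw [rightMul_tMul_tmul hσ, hB.rightMul_one, LinearMap.id_comp]

theorem IsTwisting.comp_rTensor_leftMul (hτ : IsTwisting k mulA unitA mulB unitB τ)
    (hA : IsUnitalAssoc k mulA unitA) {ρ : A →ₗ[k] A} {b : B}
    (hρ : ∀ x, τ (b ⊗ₜ x) = ρ x ⊗ₜ b) :
    τ ∘ₗ (leftMul mulB b).rTensor A = TensorProduct.map ρ (leftMul mulB b) ∘ₗ τ := by
  refine TensorProduct.ext' fun y a => ?_
  calc τ (mulB (b ⊗ₜ y) ⊗ₜ a)
      = leftMul (tMul k mulA mulB τ) (unitA 1 ⊗ₜ b) (τ (y ⊗ₜ a)) := hτ.apply_mul_tmul hA b y a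
    _ = TensorProduct.map ρ (leftMul mulB b) (τ (y ⊗ₜ a)) := by
        rw [leftMul_tMul_tmul hρ, hA.leftMul_one, LinearMap.id_comp]

end Algebra

section Coalgebra

theorem lid_rTensor_tCounit_midMap (φ : A ⊗[k] B →ₗ[k] B ⊗[k] A) (X : A ⊗[k] A) (u v : B) :
    TensorProduct.lid k (A ⊗[k] B)
        ((tCounit k counitA counitB).rTensor (A ⊗[k] B) (midMap k φ (X ⊗ₜ (u ⊗ₜ v)))) =
      TensorProduct.lid k A
        (counitB.rTensor A (φ (TensorProduct.lid k A (counitA.rTensor A X) ⊗ₜ u))) ⊗ₜ v := by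
  induction X with
  | zero => simp
  | add X X' hX hX' => simp only [add_tmul, map_add, hX, hX']
  | tmul x y =>
    simp only [midMap_tmul, LinearMap.rTensor_tmul, lid_tmul, ← smul_tmul', map_smul]
    induction φ (y ⊗ₜ u) with
    | zero => simp
    | add z z' hz hz' => simp only [add_tmul, map_add, smul_add, hz, hz']
    | tmul p q => simp [tCounit, smul_tmul', smul_smul]

theorem rid_lTensor_tCounit_midMap (φ : A ⊗[k] B →ₗ[k] B ⊗[k] A) (x y : A) (Y : B ⊗[k] B) :
    TensorProduct.rid k (A ⊗[k] B)
        ((tCounit k counitA counitB).lTensor (A ⊗[k] B) (midMap k φ ((x ⊗ₜ y) ⊗ₜ Y))) =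
      x ⊗ₜ TensorProduct.rid k B
        (counitA.lTensor B (φ (y ⊗ₜ TensorProduct.rid k B (counitB.lTensor B Y)))) := by
  induction Y with
  | zero => simp
  | add Y Y' hY hY' => simp only [tmul_add, map_add, hY, hY']
  | tmul u v =>
    simp only [midMap_tmul, LinearMap.lTensor_tmul, rid_tmul, tmul_smul, map_smul]
    induction φ (y ⊗ₜ u) with
    | zero => simp
    | add z z' hz hz' => simp only [tmul_add, map_add, smul_add, hz, hz']
    | tmul p q => simp [tCounit, smul_smul, mul_comm]

variable {τ : B ⊗[k] A ≃ₗ[k] A ⊗[k] B}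

theorem smul_lid_rTensor_tCounit_tComul
    (hA : (TensorProduct.lid k A).toLinearMap ∘ₗ counitA.rTensor A ∘ₗ comulA = LinearMap.id)
    (hB : (TensorProduct.lid k B).toLinearMap ∘ₗ counitB.rTensor B ∘ₗ comulB = LinearMap.id)
    {σ : B →ₗ[k] B} {s : k} (hs : TensorProduct.map σ σ ∘ₗ comulB = s • comulB ∘ₗ σ)
    {a : A} (hσ : ∀ y, τ (y ⊗ₜ a) = a ⊗ₜ σ y) (b : B) :
    s • TensorProduct.lid k (A ⊗[k] B) ((tCounit k counitA counitB).rTensor (A ⊗[k] B)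
      (tComul k comulA comulB τ.symm.toLinearMap (a ⊗ₜ σ b))) = a ⊗ₜ σ b := by
  have hcounit (Y : B ⊗[k] B) :
      TensorProduct.lid k (A ⊗[k] B) ((tCounit k counitA counitB).rTensor (A ⊗[k] B)
        (midMap k τ.symm.toLinearMap (comulA a ⊗ₜ TensorProduct.map σ σ Y))) =
      a ⊗ₜ σ (TensorProduct.lid k B (counitB.rTensor B Y)) := by
    have ha : TensorProduct.lid k A (counitA.rTensor A (comulA a)) = a := LinearMap.congr_fun hA a
    induction Y with
    | zero => simp
    | add Y Y' hY hY' => simp only [tmul_add, map_add, hY, hY']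
    | tmul u v =>
      rw [map_tmul, lid_rTensor_tCounit_midMap, ha, ← hσ]
      simp [smul_tmul']
  calc _ = TensorProduct.lid k (A ⊗[k] B) ((tCounit k counitA counitB).rTensor (A ⊗[k] B)
        (midMap k τ.symm.toLinearMap (comulA a ⊗ₜ (s • comulB ∘ₗ σ) b))) := by
        simp [tComul, tmul_smul]
    _ = a ⊗ₜ σ (TensorProduct.lid k B (counitB.rTensor B (comulB b))) := by
        rw [← hs, LinearMap.comp_apply, hcounit]
    _ = a ⊗ₜ σ b := congrArg (a ⊗ₜ σ ·) (LinearMap.congr_fun hB b)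

theorem smul_rid_lTensor_tCounit_tComul
    (hA : (TensorProduct.rid k A).toLinearMap ∘ₗ counitA.lTensor A ∘ₗ comulA = LinearMap.id)
    (hB : (TensorProduct.rid k B).toLinearMap ∘ₗ counitB.lTensor B ∘ₗ comulB = LinearMap.id)
    {ρ : A →ₗ[k] A} {s : k} (hs : TensorProduct.map ρ ρ ∘ₗ comulA = s • comulA ∘ₗ ρ)
    {b : B} (hρ : ∀ x, τ (b ⊗ₜ x) = ρ x ⊗ₜ b) (a : A) :
    s • TensorProduct.rid k (A ⊗[k] B) ((tCounit k counitA counitB).lTensor (A ⊗[k] B)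
      (tComul k comulA comulB τ.symm.toLinearMap (ρ a ⊗ₜ b))) = ρ a ⊗ₜ b := by
  have hcounit (X : A ⊗[k] A) :
      TensorProduct.rid k (A ⊗[k] B) ((tCounit k counitA counitB).lTensor (A ⊗[k] B)
        (midMap k τ.symm.toLinearMap (TensorProduct.map ρ ρ X ⊗ₜ comulB b))) =
      ρ (TensorProduct.rid k A (counitA.lTensor A X)) ⊗ₜ b := by
    have hb : TensorProduct.rid k B (counitB.lTensor B (comulB b)) = b := LinearMap.congr_fun hB b
    induction X with
    | zero => simp
    | add X X' hX hX' => simp only [add_tmul, map_add, hX, hX']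
    | tmul x y =>
      rw [map_tmul, rid_lTensor_tCounit_midMap, hb, ← hρ]
      simp [smul_tmul']
  calc _ = TensorProduct.rid k (A ⊗[k] B) ((tCounit k counitA counitB).lTensor (A ⊗[k] B)
        (midMap k τ.symm.toLinearMap ((s • comulA ∘ₗ ρ) a ⊗ₜ comulB b))) := by
        simp [tComul, ← smul_tmul']
    _ = ρ (TensorProduct.rid k A (counitA.lTensor A (comulA a))) ⊗ₜ b := by
        rw [← hs, LinearMap.comp_apply, hcounit]
    _ = ρ a ⊗ₜ b := congrArg (ρ · ⊗ₜ b) (LinearMap.congr_fun hA a)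

theorem smul_tComul_comp_rightMul_tMul
    (hτ : IsTwisting k mulA unitA mulB unitB τ.toLinearMap) (hB : IsUnitalAssoc k mulB unitB)
    (hfrobA : ∀ y, comulA ∘ₗ rightMul mulA y = (rightMul mulA y).lTensor A ∘ₗ comulA)
    (hfrobB : ∀ y, comulB ∘ₗ rightMul mulB y = (rightMul mulB y).lTensor B ∘ₗ comulB)
    {σ : B →ₗ[k] B} {s : k} (hs : TensorProduct.map σ σ ∘ₗ comulB = s • comulB ∘ₗ σ)
    {a : A} (hσ : ∀ y, τ (y ⊗ₜ a) = a ⊗ₜ σ y) (b : B) :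
    s • tComul k comulA comulB τ.symm.toLinearMap ∘ₗ
        rightMul (tMul k mulA mulB τ.toLinearMap) (a ⊗ₜ b) =
      (rightMul (tMul k mulA mulB τ.toLinearMap) (a ⊗ₜ b)).lTensor (A ⊗[k] B) ∘ₗ
        tComul k comulA comulB τ.symm.toLinearMap := by
  have hintertwine : τ.symm.toLinearMap ∘ₗ TensorProduct.map (rightMul mulA a) σ =
      (rightMul mulA a).lTensor B ∘ₗ τ.symm.toLinearMap := by
    rw [LinearEquiv.toLinearMap_symm_comp_eq, ← LinearMap.comp_assoc,
      LinearEquiv.eq_comp_toLinearMap_symm, hτ.comp_lTensor_rightMul hB hσ]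
  have hcomulB : s • comulB ∘ₗ rightMul mulB b ∘ₗ σ =
      TensorProduct.map σ (rightMul mulB b ∘ₗ σ) ∘ₗ comulB := by
    rw [← LinearMap.comp_assoc, hfrobB, LinearMap.comp_assoc, ← LinearMap.comp_smul, ← hs,
      ← LinearMap.comp_assoc, LinearMap.lTensor_comp_map]
  rw [rightMul_tMul_tmul hσ]
  calc s • tComul k comulA comulB τ.symm.toLinearMap ∘ₗ
        TensorProduct.map (rightMul mulA a) (rightMul mulB b ∘ₗ σ)
      = midMap k τ.symm.toLinearMap ∘ₗ TensorProduct.map (comulA ∘ₗ rightMul mulA a)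
          (s • comulB ∘ₗ rightMul mulB b ∘ₗ σ) := by
        rw [TensorProduct.map_smul_right, tComul, LinearMap.comp_smul, LinearMap.comp_assoc,
          ← TensorProduct.map_comp]
    _ = midMap k τ.symm.toLinearMap ∘ₗ
          TensorProduct.map ((rightMul mulA a).lTensor A)
            (TensorProduct.map σ (rightMul mulB b ∘ₗ σ)) ∘ₗ
          TensorProduct.map comulA comulB := by
        rw [hfrobA, hcomulB, TensorProduct.map_comp]
    _ = TensorProduct.map LinearMap.id
          (TensorProduct.map (rightMul mulA a) (rightMul mulB b ∘ₗ σ)) ∘ₗ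
        midMap k τ.symm.toLinearMap ∘ₗ TensorProduct.map comulA comulB := by
        rw [← LinearMap.comp_assoc, LinearMap.lTensor, midMap_comp_map hintertwine,
          TensorProduct.map_id, LinearMap.comp_assoc]

theorem smul_tComul_comp_leftMul_tMul
    (hτ : IsTwisting k mulA unitA mulB unitB τ.toLinearMap) (hA : IsUnitalAssoc k mulA unitA)
    (hfrobA : ∀ x, comulA ∘ₗ leftMul mulA x = (leftMul mulA x).rTensor A ∘ₗ comulA)
    (hfrobB : ∀ x, comulB ∘ₗ leftMul mulB x = (leftMul mulB x).rTensor B ∘ₗ comulB)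
    {ρ : A →ₗ[k] A} {s : k} (hs : TensorProduct.map ρ ρ ∘ₗ comulA = s • comulA ∘ₗ ρ)
    {b : B} (hρ : ∀ x, τ (b ⊗ₜ x) = ρ x ⊗ₜ b) (a : A) :
    s • tComul k comulA comulB τ.symm.toLinearMap ∘ₗ
        leftMul (tMul k mulA mulB τ.toLinearMap) (a ⊗ₜ b) =
      (leftMul (tMul k mulA mulB τ.toLinearMap) (a ⊗ₜ b)).rTensor (A ⊗[k] B) ∘ₗ
        tComul k comulA comulB τ.symm.toLinearMap := by
  have hintertwine : τ.symm.toLinearMap ∘ₗ TensorProduct.map ρ (leftMul mulB b) =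
      (leftMul mulB b).rTensor A ∘ₗ τ.symm.toLinearMap := by
    rw [LinearEquiv.toLinearMap_symm_comp_eq, ← LinearMap.comp_assoc,
      LinearEquiv.eq_comp_toLinearMap_symm, hτ.comp_rTensor_leftMul hA hρ]
  have hcomulA : s • comulA ∘ₗ leftMul mulA a ∘ₗ ρ =
      TensorProduct.map (leftMul mulA a ∘ₗ ρ) ρ ∘ₗ comulA := by
    rw [← LinearMap.comp_assoc, hfrobA, LinearMap.comp_assoc, ← LinearMap.comp_smul, ← hs,
      ← LinearMap.comp_assoc, LinearMap.rTensor_comp_map]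
  rw [leftMul_tMul_tmul hρ]
  calc s • tComul k comulA comulB τ.symm.toLinearMap ∘ₗ
        TensorProduct.map (leftMul mulA a ∘ₗ ρ) (leftMul mulB b)
      = midMap k τ.symm.toLinearMap ∘ₗ
          TensorProduct.map (s • comulA ∘ₗ leftMul mulA a ∘ₗ ρ) (comulB ∘ₗ leftMul mulB b) := by
        rw [TensorProduct.map_smul_left, tComul, LinearMap.comp_smul, LinearMap.comp_assoc,
          ← TensorProduct.map_comp]
    _ = midMap k τ.symm.toLinearMap ∘ₗ
          TensorProduct.map (TensorProduct.map (leftMul mulA a ∘ₗ ρ) ρ)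
            ((leftMul mulB b).rTensor B) ∘ₗ
          TensorProduct.map comulA comulB := by
        rw [hfrobB, hcomulA, TensorProduct.map_comp]
    _ = TensorProduct.map (TensorProduct.map (leftMul mulA a ∘ₗ ρ) (leftMul mulB b))
          LinearMap.id ∘ₗ
        midMap k τ.symm.toLinearMap ∘ₗ TensorProduct.map comulA comulB := by
        rw [← LinearMap.comp_assoc, LinearMap.rTensor, midMap_comp_map hintertwine,
          TensorProduct.map_id, LinearMap.comp_assoc]

end Coalgebra

end Twist

section Bicharacter

variable {k F G : Type*} [Field k] [AddCommGroup F] [AddCommGroup G]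
  (t : (F ⊗[ℤ] G) →+ Additive kˣ)

/-- The character `χ_f = t^{⟨f|-⟩}` of `G`, by which a homogeneous element of degree `f` of `A`
scales `B` under the twist. -/
def bicharLeft (f : F) : AddChar G k where
  toFun g := ((t (f ⊗ₜ g)).toMul : kˣ)
  map_zero_eq_one' := by simp
  map_add_eq_mul' g g' := by simp [tmul_add]

/-- The character `χ^g = t^{⟨-|g⟩}` of `F`, by which a homogeneous element of degree `g` of `B`
scales `A` under the twist. -/
def bicharRight (g : G) : AddChar F k where
  toFun f := ((t (f ⊗ₜ g)).toMul : kˣ)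
  map_zero_eq_one' := by simp
  map_add_eq_mul' f f' := by simp [add_tmul]

variable {t}

theorem bicharLeft_ne_zero (f : F) (g : G) : bicharLeft t f g ≠ 0 := Units.ne_zero _

theorem bicharRight_ne_zero (g : G) (f : F) : bicharRight t g f ≠ 0 := Units.ne_zero _

theorem bicharLeft_eq_one_iff (f : F) (g d : G) :
    bicharLeft t f d = 1 ↔ t (f ⊗ₜ g) = t (f ⊗ₜ (g + d)) := by
  rw [tmul_add, map_add, left_eq_add]
  exact Units.val_eq_one

theorem bicharRight_eq_one_iff (g : G) (f d : F) :
    bicharRight t g d = 1 ↔ t (f ⊗ₜ g) = t ((f + d) ⊗ₜ g) := by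
  rw [add_tmul, map_add, left_eq_add]
  exact Units.val_eq_one

end Bicharacter

section BicharacterTwist

variable {k A B F G : Type*} [Field k] [AddCommGroup A] [Module k A] [AddCommGroup B] [Module k B]
  [AddCommGroup F] [AddCommGroup G]
  {𝒜 : F → Submodule k A} {ℬ : G → Submodule k B} {t : (F ⊗[ℤ] G) →+ Additive kˣ}
  {τ : B ⊗[k] A ≃ₗ[k] A ⊗[k] B}

variable (𝒜 ℬ t τ) in
/-- `τ` is the twist by the bicharacter `t`: `τ (b ⊗ a) = t^{⟨|a| | |b|⟩} a ⊗ b` on homogeneous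
elements. -/
def IsBicharacterTwist : Prop :=
  ∀ (f : F) (g : G), ∀ a ∈ 𝒜 f, ∀ b ∈ ℬ g, τ (b ⊗ₜ a) = bicharLeft t f g • (a ⊗ₜ[k] b)

theorem IsBicharacterTwist.apply_tmul_of_mem_left [DecidableEq G] [DirectSum.Decomposition ℬ]
    (hτ : IsBicharacterTwist 𝒜 ℬ t τ) {f : F} {a : A} (ha : a ∈ 𝒜 f) (b : B) :
    τ (b ⊗ₜ a) = a ⊗ₜ gradedScale ℬ (bicharLeft t f) b := by
  have hmaps : τ.toLinearMap ∘ₗ (TensorProduct.mk k B A).flip a =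
      TensorProduct.mk k A B a ∘ₗ gradedScale ℬ (bicharLeft t f) :=
    linearMap_ext_of_homogeneous ℬ fun g b hb _ => by
      simp [hτ f g a ha b hb, gradedScale_of_mem _ hb]
  exact LinearMap.congr_fun hmaps b

theorem IsBicharacterTwist.apply_tmul_of_mem_right [DecidableEq F] [DirectSum.Decomposition 𝒜]
    (hτ : IsBicharacterTwist 𝒜 ℬ t τ) {g : G} {b : B} (hb : b ∈ ℬ g) (a : A) :
    τ (b ⊗ₜ a) = gradedScale 𝒜 (bicharRight t g) a ⊗ₜ b := by
  have hmaps : τ.toLinearMap ∘ₗ TensorProduct.mk k B A b =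
      (TensorProduct.mk k A B).flip b ∘ₗ gradedScale 𝒜 (bicharRight t g) :=
    linearMap_ext_of_homogeneous 𝒜 fun f a ha _ => by
      simp only [LinearMap.comp_apply, LinearEquiv.coe_coe, mk_apply, LinearMap.flip_apply,
        hτ f g a ha b hb, gradedScale_of_mem _ ha, smul_tmul']
      rfl
  exact LinearMap.congr_fun hmaps a

variable {mulA : A ⊗[k] A →ₗ[k] A} {unitA : k →ₗ[k] A}
  {comulA : A →ₗ[k] A ⊗[k] A} {counitA : A →ₗ[k] k}
  {mulB : B ⊗[k] B →ₗ[k] B} {unitB : k →ₗ[k] B}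
  {comulB : B →ₗ[k] B ⊗[k] B} {counitB : B →ₗ[k] k} {dA : F} {dB : G}

theorem IsBicharacterTwist.bicharLeft_smul_lid_rTensor_tCounit_tComul
    [DecidableEq G] [DirectSum.Decomposition ℬ] (hτ : IsBicharacterTwist 𝒜 ℬ t τ)
    (hA : (TensorProduct.lid k A).toLinearMap ∘ₗ counitA.rTensor A ∘ₗ comulA = LinearMap.id)
    (hB : (TensorProduct.lid k B).toLinearMap ∘ₗ counitB.rTensor B ∘ₗ comulB = LinearMap.id)
    (hΔB : ComulGradedOfDegree k ℬ comulB dB)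
    {f : F} {g : G} {a : A} {b : B} (ha : a ∈ 𝒜 f) (hb : b ∈ ℬ g) :
    bicharLeft t f dB • TensorProduct.lid k (A ⊗[k] B)
      ((tCounit k counitA counitB).rTensor (A ⊗[k] B)
        (tComul k comulA comulB τ.symm.toLinearMap (a ⊗ₜ b))) = a ⊗ₜ b := by
  have hdefect := smul_lid_rTensor_tCounit_tComul hA hB (hΔB.map_gradedScale_comp (bicharLeft t f))
    (hτ.apply_tmul_of_mem_left ha) b
  rw [gradedScale_of_mem _ hb, tmul_smul, map_smul, map_smul, map_smul, smul_comm] at hdefect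
  exact smul_right_injective _ (bicharLeft_ne_zero f g) hdefect

theorem IsBicharacterTwist.bicharRight_smul_rid_lTensor_tCounit_tComul
    [DecidableEq F] [DirectSum.Decomposition 𝒜] (hτ : IsBicharacterTwist 𝒜 ℬ t τ)
    (hA : (TensorProduct.rid k A).toLinearMap ∘ₗ counitA.lTensor A ∘ₗ comulA = LinearMap.id)
    (hB : (TensorProduct.rid k B).toLinearMap ∘ₗ counitB.lTensor B ∘ₗ comulB = LinearMap.id)
    (hΔA : ComulGradedOfDegree k 𝒜 comulA dA)
    {f : F} {g : G} {a : A} {b : B} (ha : a ∈ 𝒜 f) (hb : b ∈ ℬ g) :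
    bicharRight t g dA • TensorProduct.rid k (A ⊗[k] B)
      ((tCounit k counitA counitB).lTensor (A ⊗[k] B)
        (tComul k comulA comulB τ.symm.toLinearMap (a ⊗ₜ b))) = a ⊗ₜ b := by
  have hdefect := smul_rid_lTensor_tCounit_tComul hA hB
    (hΔA.map_gradedScale_comp (bicharRight t g)) (hτ.apply_tmul_of_mem_right hb) a
  rw [gradedScale_of_mem _ ha, ← smul_tmul', map_smul, map_smul, map_smul, smul_comm] at hdefect
  exact smul_right_injective _ (bicharRight_ne_zero g f) hdefect

variable [DecidableEq F] [DecidableEq G] [DirectSum.Decomposition 𝒜] [DirectSum.Decomposition ℬ]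

theorem IsBicharacterTwist.bicharacters_eq_one_of_isFrobenius (hτ : IsBicharacterTwist 𝒜 ℬ t τ)
    (hA : IsFrobenius k mulA unitA comulA counitA) (hB : IsFrobenius k mulB unitB comulB counitB)
    (hΔA : ComulGradedOfDegree k 𝒜 comulA dA) (hΔB : ComulGradedOfDegree k ℬ comulB dB)
    (h : IsFrobenius k (tMul k mulA mulB τ.toLinearMap) (tUnit k unitA unitB)
      (tComul k comulA comulB τ.symm.toLinearMap) (tCounit k counitA counitB))
    {f : F} {g : G} {a : A} {b : B} (ha : a ∈ 𝒜 f) (hb : b ∈ ℬ g) (ha0 : a ≠ 0) (hb0 : b ≠ 0) :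
    bicharRight t g dA = 1 ∧ bicharLeft t f dB = 1 := by
  obtain ⟨_, hlidA, hridA, _⟩ := isFrobenius_iff.1 hA
  obtain ⟨_, hlidB, hridB, _⟩ := isFrobenius_iff.1 hB
  obtain ⟨_, hlid, hrid, _⟩ := isFrobenius_iff.1 h
  have hleft := hτ.bicharLeft_smul_lid_rTensor_tCounit_tComul hlidA hlidB hΔB ha hb
  have hright := hτ.bicharRight_smul_rid_lTensor_tCounit_tComul hridA hridB hΔA ha hb
  have hlid_apply : TensorProduct.lid k (A ⊗[k] B) ((tCounit k counitA counitB).rTensor _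
      (tComul k comulA comulB τ.symm.toLinearMap (a ⊗ₜ b))) = a ⊗ₜ b :=
    LinearMap.congr_fun hlid (a ⊗ₜ b)
  have hrid_apply : TensorProduct.rid k (A ⊗[k] B) ((tCounit k counitA counitB).lTensor _
      (tComul k comulA comulB τ.symm.toLinearMap (a ⊗ₜ b))) = a ⊗ₜ b :=
    LinearMap.congr_fun hrid (a ⊗ₜ b)
  rw [hlid_apply] at hleft
  rw [hrid_apply] at hright
  have hinj := smul_left_injective k (tmul_ne_zero (R := k) ha0 hb0)
  exact ⟨hinj (by simpa using hright), hinj (by simpa using hleft)⟩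

theorem IsBicharacterTwist.isFrobenius_of_bicharacters_eq_one (hτ : IsBicharacterTwist 𝒜 ℬ t τ)
    (hτtwist : IsTwisting k mulA unitA mulB unitB τ.toLinearMap)
    (hA : IsFrobenius k mulA unitA comulA counitA) (hB : IsFrobenius k mulB unitB comulB counitB)
    (hΔA : ComulGradedOfDegree k 𝒜 comulA dA) (hΔB : ComulGradedOfDegree k ℬ comulB dB)
    (h : ∀ f g, ∀ a ∈ 𝒜 f, ∀ b ∈ ℬ g, a ≠ 0 → b ≠ 0 →
      bicharRight t g dA = 1 ∧ bicharLeft t f dB = 1) :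
    IsFrobenius k (tMul k mulA mulB τ.toLinearMap) (tUnit k unitA unitB)
      (tComul k comulA comulB τ.symm.toLinearMap) (tCounit k counitA counitB) := by
  obtain ⟨halgA, hlidA, hridA, hrightA, hleftA⟩ := isFrobenius_iff.1 hA
  obtain ⟨halgB, hlidB, hridB, hrightB, hleftB⟩ := isFrobenius_iff.1 hB
  let m := tMul k mulA mulB τ.toLinearMap
  let Δ := tComul k comulA comulB τ.symm.toLinearMap
  have hright : LinearMap.compRight k Δ ∘ₗ rightMul m =
      LinearMap.lcomp k _ Δ ∘ₗ LinearMap.lTensorHom (A ⊗[k] B) ∘ₗ rightMul m :=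
    tensorProduct_ext_of_homogeneous 𝒜 ℬ fun f g a ha b hb ha0 hb0 => by
      have hdefect := smul_tComul_comp_rightMul_tMul hτtwist halgB hrightA hrightB
        (hΔB.map_gradedScale_comp (bicharLeft t f)) (hτ.apply_tmul_of_mem_left ha) b
      rwa [(h f g a ha b hb ha0 hb0).2, one_smul] at hdefect
  have hleft : LinearMap.compRight k Δ ∘ₗ leftMul m =
      LinearMap.lcomp k _ Δ ∘ₗ LinearMap.rTensorHom (A ⊗[k] B) ∘ₗ leftMul m :=
    tensorProduct_ext_of_homogeneous 𝒜 ℬ fun f g a ha b hb ha0 hb0 => by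
      have hdefect := smul_tComul_comp_leftMul_tMul hτtwist halgA hleftA hleftB
        (hΔA.map_gradedScale_comp (bicharRight t g)) (hτ.apply_tmul_of_mem_right hb) a
      rwa [(h f g a ha b hb ha0 hb0).1, one_smul] at hdefect
  refine isFrobenius_iff.2 ⟨hτtwist.isUnitalAssoc_tMul halgA halgB,
    tensorProduct_ext_of_homogeneous 𝒜 ℬ fun f g a ha b hb ha0 hb0 => ?_,
    tensorProduct_ext_of_homogeneous 𝒜 ℬ fun f g a ha b hb ha0 hb0 => ?_,
    LinearMap.congr_fun hright, LinearMap.congr_fun hleft⟩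
  · have hdefect := hτ.bicharLeft_smul_lid_rTensor_tCounit_tComul hlidA hlidB hΔB ha hb
    rwa [(h f g a ha b hb ha0 hb0).2, one_smul] at hdefect
  · have hdefect := hτ.bicharRight_smul_rid_lTensor_tCounit_tComul hridA hridB hΔA ha hb
    rwa [(h f g a ha b hb ha0 hb0).1, one_smul] at hdefect

end BicharacterTwist

end TTP

open TTP in
/-- Theorem 6.2 of the paper: the twisted tensor product `A ⊗^t B`
of graded Frobenius algebras along the twist by a bicharacter `t` is a Frobenius
algebra iff `t^{⟨|a| | |b|⟩} = t^{⟨|a|+d_A | |b|⟩}` and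
`t^{⟨|a| | |b|⟩} = t^{⟨|a| | |b|+d_B⟩}` for all homogeneous `a ∈ A`, `b ∈ B`. -/
theorem bicharacter_twist_isFrobenius_iff
    {k A B F G : Type*} [Field k]
    [AddCommGroup A] [Module k A] [AddCommGroup B] [Module k B]
    [AddCommGroup F] [AddCommGroup G] [DecidableEq F] [DecidableEq G]
    (𝒜 : F → Submodule k A) (ℬ : G → Submodule k B)
    [DirectSum.Decomposition 𝒜] [DirectSum.Decomposition ℬ]
    (mulA : A ⊗[k] A →ₗ[k] A) (unitA : k →ₗ[k] A)
    (comulA : A →ₗ[k] A ⊗[k] A) (counitA : A →ₗ[k] k)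
    (mulB : B ⊗[k] B →ₗ[k] B) (unitB : k →ₗ[k] B)
    (comulB : B →ₗ[k] B ⊗[k] B) (counitB : B →ₗ[k] k)
    (hA : IsFrobenius k mulA unitA comulA counitA)
    (hB : IsFrobenius k mulB unitB comulB counitB)
    (dA : F) (dB : G)
    (hΔA : ComulGradedOfDegree k 𝒜 comulA dA)
    (hΔB : ComulGradedOfDegree k ℬ comulB dB)
    (t : (F ⊗[ℤ] G) →+ Additive kˣ)
    (τ : B ⊗[k] A ≃ₗ[k] A ⊗[k] B)
    (hτ : ∀ (f : F) (g : G), ∀ a ∈ 𝒜 f, ∀ b ∈ ℬ g,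
      τ (b ⊗ₜ[k] a) = ((Additive.toMul (t (f ⊗ₜ[ℤ] g)) : kˣ) : k) • (a ⊗ₜ[k] b))
    (hτtwist : IsTwisting k mulA unitA mulB unitB τ.toLinearMap) :
    IsFrobenius k (tMul k mulA mulB τ.toLinearMap) (tUnit k unitA unitB)
        (tComul k comulA comulB τ.symm.toLinearMap) (tCounit k counitA counitB)
      ↔ (∀ (f : F) (g : G), (∃ a ∈ 𝒜 f, a ≠ 0) → (∃ b ∈ ℬ g, b ≠ 0) →
            t (f ⊗ₜ[ℤ] g) = t ((f + dA) ⊗ₜ[ℤ] g))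
        ∧ (∀ (f : F) (g : G), (∃ a ∈ 𝒜 f, a ≠ 0) → (∃ b ∈ ℬ g, b ≠ 0) →
            t (f ⊗ₜ[ℤ] g) = t (f ⊗ₜ[ℤ] (g + dB))) := by
  have hbichar : IsBicharacterTwist 𝒜 ℬ t τ := hτ
  constructor
  · intro h
    refine ⟨fun f g ⟨a, ha, ha0⟩ ⟨b, hb, hb0⟩ => ?_, fun f g ⟨a, ha, ha0⟩ ⟨b, hb, hb0⟩ => ?_⟩
    · exact (bicharRight_eq_one_iff g f dA).1
        (hbichar.bicharacters_eq_one_of_isFrobenius hA hB hΔA hΔB h ha hb ha0 hb0).1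
    · exact (bicharLeft_eq_one_iff f g dB).1
        (hbichar.bicharacters_eq_one_of_isFrobenius hA hB hΔA hΔB h ha hb ha0 hb0).2
  · rintro ⟨hdA, hdB⟩
    exact hbichar.isFrobenius_of_bicharacters_eq_one hτtwist hA hB hΔA hΔB
      fun f g a ha b hb ha0 hb0 =>
        ⟨(bicharRight_eq_one_iff g f dA).2 (hdA f g ⟨a, ha, ha0⟩ ⟨b, hb, hb0⟩),
          (bicharLeft_eq_one_iff f g dB).2 (hdB f g ⟨a, ha, ha0⟩ ⟨b, hb, hb0⟩)⟩
end

section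
/- Let A and B be Frobenius algebras over k graded by abelian groups F and G respectively, with comultiplications Δ_A : A → A⊗A and Δ_B : B → B⊗B graded maps of degree 0, and let t : F⊗_ℤ G → k^× be a group homomorphism. Then the twisted tensor product A⊗^t B, with its induced multiplication, unit, comultiplication and counit, is a Frobenius algebra. -/
open scoped TensorProduct

/-!
Let `V = A ⊗ B` be the ordinary tensor product of the two Frobenius algebras. With the flip
`σ : A ⊗ B → B ⊗ A` and the invertible operator `T = 1 ⊗ στ ⊗ 1` on `V ⊗ V`, the twisted
multiplication and comultiplication are `∇ T` and `T⁻¹ Δ`. Such a twist of a Frobenius algebra is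
again Frobenius as soon as `T` behaves like the action of a universal `R`-matrix: it satisfies the
hexagon identities `T (∇ ⊗ 1) = (∇ ⊗ 1) T₁₃ T₂₃`, `(Δ ⊗ 1) T = T₁₃ T₂₃ (Δ ⊗ 1)` and their mirror
images, fixes `1 ⊗ v` and `v ⊗ 1`, and `T₁₂ T₂₃ = T₂₃ T₁₂`; invertibility turns the hexagons for
`Δ` into `(ε ⊗ 1) T = ε ⊗ 1`. The identities for `∇` say that `τ` is a twisting map. Those for `Δ`
hold because on homogeneous elements `τ` is the flip scaled by `t`, which is additive in each degree
and so does not see how a comultiplication of degree `0` splits the degree of its argument.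
-/

namespace TTP

open TensorProduct (assoc comm lid map rid rightComm tensorTensorTensorComm)

section LegOperators

variable {k V : Type*} [Field k] [AddCommGroup V] [Module k V]

/-- The operator `T` acting on the first two legs of `V ⊗ V ⊗ V`. -/
noncomputable def leg₁₂ (T : V ⊗[k] V ≃ₗ[k] V ⊗[k] V) :
    (V ⊗[k] V) ⊗[k] V ≃ₗ[k] (V ⊗[k] V) ⊗[k] V :=
  T.rTensor V

/-- The operator `T` acting on the last two legs of `V ⊗ V ⊗ V`. -/
noncomputable def leg₂₃ (T : V ⊗[k] V ≃ₗ[k] V ⊗[k] V) :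
    (V ⊗[k] V) ⊗[k] V ≃ₗ[k] (V ⊗[k] V) ⊗[k] V :=
  assoc k V V V ≪≫ₗ T.lTensor V ≪≫ₗ (assoc k V V V).symm

/-- The operator `T` acting on the outer two legs of `V ⊗ V ⊗ V`. -/
noncomputable def leg₁₃ (T : V ⊗[k] V ≃ₗ[k] V ⊗[k] V) :
    (V ⊗[k] V) ⊗[k] V ≃ₗ[k] (V ⊗[k] V) ⊗[k] V :=
  rightComm k V V V ≪≫ₗ T.rTensor V ≪≫ₗ rightComm k V V V

variable (T : V ⊗[k] V ≃ₗ[k] V ⊗[k] V)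

@[simp]
lemma leg₁₂_tmul (x : V ⊗[k] V) (w : V) : leg₁₂ T (x ⊗ₜ w) = T x ⊗ₜ w := rfl

@[simp]
lemma leg₂₃_tmul (u v w : V) :
    leg₂₃ T ((u ⊗ₜ v) ⊗ₜ w) = (assoc k V V V).symm (u ⊗ₜ T (v ⊗ₜ w)) := rfl

@[simp]
lemma leg₁₃_tmul (u v w : V) :
    leg₁₃ T ((u ⊗ₜ v) ⊗ₜ w) = rightComm k V V V (T (u ⊗ₜ w) ⊗ₜ v) := rfl

/-- `T` relates to the multiplication and the unit of an algebra `V` as the action of a universal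
`R`-matrix does: `T` fixes `1 ⊗ v` and `v ⊗ 1`, `T (∇ ⊗ 1) = (∇ ⊗ 1) T₁₃ T₂₃` and
`T (1 ⊗ ∇) = (1 ⊗ ∇) T₁₃ T₁₂`. -/
structure IsAlgebraTwist (mul : V ⊗[k] V →ₗ[k] V) (unit : k →ₗ[k] V)
    (T : V ⊗[k] V ≃ₗ[k] V ⊗[k] V) : Prop where
  unit_left (v : V) : T (unit 1 ⊗ₜ v) = unit 1 ⊗ₜ v
  unit_right (v : V) : T (v ⊗ₜ unit 1) = v ⊗ₜ unit 1
  mul_left (x : (V ⊗[k] V) ⊗[k] V) :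
    T (map mul .id x) = map mul .id (leg₁₃ T (leg₂₃ T x))
  mul_right (x : (V ⊗[k] V) ⊗[k] V) :
    T (map .id mul (assoc k V V V x)) =
      map .id mul (assoc k V V V (leg₁₃ T (leg₁₂ T x)))

/-- `T` is compatible with the comultiplication of a coalgebra `V`:
`(Δ ⊗ 1) T = T₁₃ T₂₃ (Δ ⊗ 1)` and `(1 ⊗ Δ) T = T₁₃ T₁₂ (1 ⊗ Δ)`. As `T` is invertible, the
compatibility with the counit follows. -/
structure IsCoalgebraTwist (comul : V →ₗ[k] V ⊗[k] V) (T : V ⊗[k] V ≃ₗ[k] V ⊗[k] V) : Prop where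
  comul_left (x : V ⊗[k] V) :
    map comul .id (T x) = leg₁₃ T (leg₂₃ T (map comul .id x))
  comul_right (x : V ⊗[k] V) :
    (assoc k V V V).symm (map .id comul (T x)) =
      leg₁₃ T (leg₁₂ T ((assoc k V V V).symm (map .id comul x)))

variable {T} {mul : V ⊗[k] V →ₗ[k] V} {unit : k →ₗ[k] V}
  {comul : V →ₗ[k] V ⊗[k] V} {counit : V →ₗ[k] k}

lemma map_comp_id_eq_leg₁₂ (f : V ⊗[k] V →ₗ[k] V) (x : (V ⊗[k] V) ⊗[k] V) :
    map (f ∘ₗ T.toLinearMap) .id x = map f .id (leg₁₂ T x) :=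
  LinearMap.congr_fun (LinearMap.rTensor_comp V f T.toLinearMap) x

lemma map_id_comp_eq_leg₂₃ (f : V ⊗[k] V →ₗ[k] V) (x : (V ⊗[k] V) ⊗[k] V) :
    map .id (f ∘ₗ T.toLinearMap) (assoc k V V V x) =
      map .id f (assoc k V V V (leg₂₃ T x)) := by
  simp only [leg₂₃, LinearEquiv.trans_apply, LinearEquiv.apply_symm_apply]
  exact LinearMap.congr_fun (LinearMap.lTensor_comp V f T.toLinearMap) _

lemma map_symm_comp_id_eq_leg₁₂_symm (f : V →ₗ[k] V ⊗[k] V) (x : V ⊗[k] V) :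
    map (T.symm.toLinearMap ∘ₗ f) .id x =
      (leg₁₂ T).symm (map f .id x) :=
  LinearMap.congr_fun (LinearMap.rTensor_comp V T.symm.toLinearMap f) x

lemma map_id_symm_comp_eq_leg₂₃_symm (f : V →ₗ[k] V ⊗[k] V) (x : V ⊗[k] V) :
    (assoc k V V V).symm (map .id (T.symm.toLinearMap ∘ₗ f) x) =
      (leg₂₃ T).symm ((assoc k V V V).symm (map .id f x)) := by
  simp only [leg₂₃, LinearEquiv.trans_symm, LinearEquiv.trans_apply, LinearEquiv.symm_symm,
    LinearEquiv.apply_symm_apply]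
  exact congrArg (assoc k V V V).symm
    (LinearMap.congr_fun (LinearMap.lTensor_comp V T.symm.toLinearMap f) x)

lemma IsAlgebraTwist.symm_mul_left (hT : IsAlgebraTwist mul unit T) (x : (V ⊗[k] V) ⊗[k] V) :
    T.symm (map mul .id x) =
      map mul .id ((leg₂₃ T).symm ((leg₁₃ T).symm x)) := by
  rw [LinearEquiv.symm_apply_eq, hT.mul_left]
  simp only [LinearEquiv.apply_symm_apply]

lemma IsAlgebraTwist.symm_mul_right (hT : IsAlgebraTwist mul unit T) (x : (V ⊗[k] V) ⊗[k] V) :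
    T.symm (map .id mul (assoc k V V V x)) =
      map .id mul
        (assoc k V V V ((leg₁₂ T).symm ((leg₁₃ T).symm x))) := by
  rw [LinearEquiv.symm_apply_eq, hT.mul_right]
  simp only [LinearEquiv.apply_symm_apply]

lemma IsCoalgebraTwist.comul_left_symm (hT : IsCoalgebraTwist comul T) (x : V ⊗[k] V) :
    map comul .id (T.symm x) =
      (leg₂₃ T).symm ((leg₁₃ T).symm (map comul .id x)) := by
  rw [LinearEquiv.eq_symm_apply, LinearEquiv.eq_symm_apply, ← hT.comul_left,
    LinearEquiv.apply_symm_apply]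

lemma IsCoalgebraTwist.comul_right_symm (hT : IsCoalgebraTwist comul T) (x : V ⊗[k] V) :
    (assoc k V V V).symm (map .id comul (T.symm x)) =
      (leg₁₂ T).symm ((leg₁₃ T).symm
        ((assoc k V V V).symm (map .id comul x))) := by
  rw [LinearEquiv.eq_symm_apply, LinearEquiv.eq_symm_apply, ← hT.comul_right,
    LinearEquiv.apply_symm_apply]

lemma leg₁₂_leg₂₃_symm_comm (hcomm : ∀ x, leg₁₂ T (leg₂₃ T x) = leg₂₃ T (leg₁₂ T x))
    (x : (V ⊗[k] V) ⊗[k] V) : leg₁₂ T ((leg₂₃ T).symm x) = (leg₂₃ T).symm (leg₁₂ T x) := by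
  rw [LinearEquiv.eq_symm_apply, ← hcomm, LinearEquiv.apply_symm_apply]

lemma leg₁₂_symm_leg₂₃_comm (hcomm : ∀ x, leg₁₂ T (leg₂₃ T x) = leg₂₃ T (leg₁₂ T x))
    (x : (V ⊗[k] V) ⊗[k] V) : (leg₁₂ T).symm (leg₂₃ T x) = leg₂₃ T ((leg₁₂ T).symm x) := by
  rw [LinearEquiv.symm_apply_eq, hcomm, LinearEquiv.apply_symm_apply]

lemma leg₁₂_symm_leg₂₃_symm_comm (hcomm : ∀ x, leg₁₂ T (leg₂₃ T x) = leg₂₃ T (leg₁₂ T x))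
    (x : (V ⊗[k] V) ⊗[k] V) :
    (leg₁₂ T).symm ((leg₂₃ T).symm x) = (leg₂₃ T).symm ((leg₁₂ T).symm x) := by
  rw [LinearEquiv.symm_apply_eq, leg₁₂_leg₂₃_symm_comm hcomm, LinearEquiv.apply_symm_apply]

theorem IsUnitalAssoc.twist (hV : IsUnitalAssoc k mul unit) (hT : IsAlgebraTwist mul unit T)
    (hcomm : ∀ x, leg₁₂ T (leg₂₃ T x) = leg₂₃ T (leg₁₂ T x)) :
    IsUnitalAssoc k (mul ∘ₗ T.toLinearMap) unit := by
  refine ⟨?_, ?_, LinearMap.ext fun x => ?_⟩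
  · ext v
    simpa [hT.unit_left] using LinearMap.congr_fun hV.1 v
  · ext v
    simpa [hT.unit_right] using LinearMap.congr_fun hV.2.1 v
  · have associativity := LinearMap.congr_fun hV.2.2
    simp only [LinearMap.comp_apply, LinearEquiv.coe_coe] at associativity ⊢
    rw [map_comp_id_eq_leg₁₂, map_id_comp_eq_leg₂₃, hT.mul_left, hT.mul_right, associativity,
      hcomm]

/-- The map `ε ⊗ 1 ⊗ 1 : V ⊗ V ⊗ V → V ⊗ V`. -/
noncomputable def counitFirst (counit : V →ₗ[k] k) : (V ⊗[k] V) ⊗[k] V →ₗ[k] V ⊗[k] V :=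
  map ((lid k V).toLinearMap ∘ₗ map counit .id) .id

/-- The map `1 ⊗ ε ⊗ 1 : V ⊗ V ⊗ V → V ⊗ V`. -/
noncomputable def counitMiddle (counit : V →ₗ[k] k) : (V ⊗[k] V) ⊗[k] V →ₗ[k] V ⊗[k] V :=
  map ((rid k V).toLinearMap ∘ₗ map .id counit) .id

/-- The map `1 ⊗ 1 ⊗ ε : V ⊗ V ⊗ V → V ⊗ V`. -/
noncomputable def counitLast (counit : V →ₗ[k] k) : (V ⊗[k] V) ⊗[k] V →ₗ[k] V ⊗[k] V :=
  (rid k (V ⊗[k] V)).toLinearMap ∘ₗ map .id counit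

@[simp]
lemma counitFirst_tmul (u v w : V) :
    counitFirst counit ((u ⊗ₜ v) ⊗ₜ w) = counit u • (v ⊗ₜ[k] w) := by
  simp [counitFirst, TensorProduct.smul_tmul']

@[simp]
lemma counitMiddle_tmul (u v w : V) :
    counitMiddle counit ((u ⊗ₜ v) ⊗ₜ w) = counit v • (u ⊗ₜ[k] w) := by
  simp [counitMiddle, TensorProduct.smul_tmul']

@[simp]
lemma counitLast_tmul (x : V ⊗[k] V) (w : V) :
    counitLast counit (x ⊗ₜ w) = counit w • x := by
  simp [counitLast]

lemma counitMiddle_leg₁₃ (x : (V ⊗[k] V) ⊗[k] V) :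
    counitMiddle counit (leg₁₃ T x) = T (counitMiddle counit x) := by
  have counitMiddle_rightComm (y : V ⊗[k] V) (v : V) :
      counitMiddle counit (rightComm k V V V (y ⊗ₜ v)) = counit v • y := by
    induction y with
    | zero => simp
    | tmul u w => simp
    | add y z hy hz => simp only [TensorProduct.add_tmul, map_add, hy, hz, smul_add]
  refine LinearMap.congr_fun (f := counitMiddle counit ∘ₗ (leg₁₃ T).toLinearMap)
    (g := T.toLinearMap ∘ₗ counitMiddle counit) (TensorProduct.ext_threefold fun u v w => ?_) x
  simp [counitMiddle_rightComm]

lemma map_counit_counitMiddle_leg₂₃ (x : (V ⊗[k] V) ⊗[k] V) :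
    map counit .id (counitMiddle counit (leg₂₃ T x)) =
      map counit .id (T (counitFirst counit x)) := by
  have map_counit_counitMiddle (u : V) (y : V ⊗[k] V) :
      map counit .id (counitMiddle counit ((assoc k V V V).symm (u ⊗ₜ y))) =
        counit u • map counit .id y := by
    induction y with
    | zero => simp
    | tmul v w => simp [TensorProduct.smul_tmul', mul_comm]
    | add y z hy hz => simp only [TensorProduct.tmul_add, map_add, hy, hz, smul_add]
  refine LinearMap.congr_fun
    (f := map counit .id ∘ₗ counitMiddle counit ∘ₗ (leg₂₃ T).toLinearMap)
    (g := map counit .id ∘ₗ T.toLinearMap ∘ₗ counitFirst counit)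
    (TensorProduct.ext_threefold fun u v w => ?_) x
  simp [map_counit_counitMiddle]

lemma map_counit_counitMiddle_leg₁₂ (x : (V ⊗[k] V) ⊗[k] V) :
    map .id counit (counitMiddle counit (leg₁₂ T x)) =
      map .id counit (T (counitLast counit x)) := by
  have map_counit_counitMiddle (y : V ⊗[k] V) (w : V) :
      map .id counit (counitMiddle counit (y ⊗ₜ w)) = counit w • map .id counit y := by
    induction y with
    | zero => simp
    | tmul u v => simp [← TensorProduct.tmul_smul, mul_comm]
    | add y z hy hz => simp only [TensorProduct.add_tmul, map_add, hy, hz, smul_add]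
  refine LinearMap.congr_fun
    (f := map .id counit ∘ₗ counitMiddle counit ∘ₗ (leg₁₂ T).toLinearMap)
    (g := map .id counit ∘ₗ T.toLinearMap ∘ₗ counitLast counit)
    (TensorProduct.ext_threefold fun u v w => ?_) x
  simp [map_counit_counitMiddle]

lemma IsCounitalCoassoc.counitFirst_comul (hV : IsCounitalCoassoc k comul counit)
    (x : V ⊗[k] V) : counitFirst counit (map comul .id x) = x := by
  rw [counitFirst, ← LinearMap.comp_apply, ← TensorProduct.map_comp, LinearMap.comp_assoc, hV.1,
    LinearMap.id_comp, TensorProduct.map_id, LinearMap.id_apply]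

lemma IsCounitalCoassoc.counitMiddle_comul_left (hV : IsCounitalCoassoc k comul counit)
    (x : V ⊗[k] V) : counitMiddle counit (map comul .id x) = x := by
  rw [counitMiddle, ← LinearMap.comp_apply, ← TensorProduct.map_comp, LinearMap.comp_assoc,
    hV.2.1, LinearMap.id_comp, TensorProduct.map_id, LinearMap.id_apply]

lemma IsCounitalCoassoc.counitMiddle_comul_right (hV : IsCounitalCoassoc k comul counit)
    (x : V ⊗[k] V) : counitMiddle counit ((assoc k V V V).symm (map .id comul x)) = x := by
  have counitMiddle_symm_assoc (u : V) (y : V ⊗[k] V) :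
      counitMiddle counit ((assoc k V V V).symm (u ⊗ₜ y)) =
        u ⊗ₜ lid k V (map counit .id y) := by
    induction y with
    | zero => simp
    | tmul v w => simp
    | add y z hy hz => simp only [TensorProduct.tmul_add, map_add, hy, hz]
  induction x with
  | zero => simp
  | tmul u v =>
    have counital : lid k V (map counit .id (comul v)) = v := LinearMap.congr_fun hV.1 v
    rw [TensorProduct.map_tmul, counitMiddle_symm_assoc, counital, LinearMap.id_apply]
  | add x y hx hy => simp only [map_add, hx, hy]

lemma IsCounitalCoassoc.counitLast_comul (hV : IsCounitalCoassoc k comul counit)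
    (x : V ⊗[k] V) : counitLast counit ((assoc k V V V).symm (map .id comul x)) = x := by
  have counitLast_symm_assoc (u : V) (y : V ⊗[k] V) :
      counitLast counit ((assoc k V V V).symm (u ⊗ₜ y)) =
        u ⊗ₜ rid k V (map .id counit y) := by
    induction y with
    | zero => simp
    | tmul v w => simp
    | add y z hy hz => simp only [TensorProduct.tmul_add, map_add, hy, hz]
  induction x with
  | zero => simp
  | tmul u v =>
    have counital : rid k V (map .id counit (comul v)) = v := LinearMap.congr_fun hV.2.1 v
    rw [TensorProduct.map_tmul, counitLast_symm_assoc, counital, LinearMap.id_apply]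
  | add x y hx hy => simp only [map_add, hx, hy]

-- Applying `1 ⊗ ε ⊗ 1` to `(Δ ⊗ 1) T = T₁₃ T₂₃ (Δ ⊗ 1)` and cancelling `T` yields
-- `(1 ⊗ ε ⊗ 1) T₂₃ (Δ ⊗ 1) = 1`.
lemma IsCoalgebraTwist.counit_left (hT : IsCoalgebraTwist comul T)
    (hV : IsCounitalCoassoc k comul counit) (x : V ⊗[k] V) :
    map counit .id (T x) = map counit .id x := by
  have cancel : counitMiddle counit (leg₂₃ T (map comul .id x)) = x := by
    apply T.injective
    rw [← counitMiddle_leg₁₃, ← hT.comul_left, hV.counitMiddle_comul_left]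
  calc map counit .id (T x)
      = map counit .id (T (counitFirst counit (map comul .id x))) := by
        rw [hV.counitFirst_comul]
    _ = map counit .id x := by rw [← map_counit_counitMiddle_leg₂₃, cancel]

lemma IsCoalgebraTwist.counit_right (hT : IsCoalgebraTwist comul T)
    (hV : IsCounitalCoassoc k comul counit) (x : V ⊗[k] V) :
    map .id counit (T x) = map .id counit x := by
  have cancel :
      counitMiddle counit (leg₁₂ T ((assoc k V V V).symm (map .id comul x))) = x := by
    apply T.injective
    rw [← counitMiddle_leg₁₃, ← hT.comul_right, hV.counitMiddle_comul_right]
  calc map .id counit (T x)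
      = map .id counit (T (counitLast counit ((assoc k V V V).symm (map .id comul x)))) := by
        rw [hV.counitLast_comul]
    _ = map .id counit x := by rw [← map_counit_counitMiddle_leg₁₂, cancel]

theorem IsCounitalCoassoc.twist (hV : IsCounitalCoassoc k comul counit)
    (hT : IsCoalgebraTwist comul T)
    (hcomm : ∀ x, leg₁₂ T (leg₂₃ T x) = leg₂₃ T (leg₁₂ T x)) :
    IsCounitalCoassoc k (T.symm.toLinearMap ∘ₗ comul) counit := by
  refine ⟨LinearMap.ext fun v => ?_, LinearMap.ext fun v => ?_, LinearMap.ext fun v => ?_⟩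
  · have counital := LinearMap.congr_fun hV.1 v
    simp only [LinearMap.comp_apply, LinearEquiv.coe_coe] at counital ⊢
    rw [← hT.counit_left hV, LinearEquiv.apply_symm_apply, counital]
  · have counital := LinearMap.congr_fun hV.2.1 v
    simp only [LinearMap.comp_apply, LinearEquiv.coe_coe] at counital ⊢
    rw [← hT.counit_right hV, LinearEquiv.apply_symm_apply, counital]
  · have coassoc := LinearMap.congr_fun hV.2.2 v
    simp only [LinearMap.comp_apply, LinearEquiv.coe_coe] at coassoc ⊢
    rw [map_symm_comp_id_eq_leg₁₂_symm, map_id_symm_comp_eq_leg₂₃_symm, hT.comul_left_symm,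
      hT.comul_right_symm, coassoc, leg₁₂_symm_leg₂₃_symm_comm hcomm]

theorem IsFrobenius.twist (hV : IsFrobenius k mul unit comul counit)
    (hmul : IsAlgebraTwist mul unit T) (hcomul : IsCoalgebraTwist comul T)
    (hcomm : ∀ x, leg₁₂ T (leg₂₃ T x) = leg₂₃ T (leg₁₂ T x)) :
    IsFrobenius k (mul ∘ₗ T.toLinearMap) unit (T.symm.toLinearMap ∘ₗ comul) counit := by
  refine ⟨hV.1.twist hmul hcomm, hV.2.1.twist hcomul hcomm,
    LinearMap.ext fun x => ?_, LinearMap.ext fun x => ?_⟩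
  · have frobenius := LinearMap.congr_fun hV.2.2.1 (T x)
    simp only [LinearMap.comp_apply, LinearEquiv.coe_coe] at frobenius ⊢
    rw [frobenius, hcomul.comul_left, hmul.symm_mul_right, LinearEquiv.symm_apply_apply,
      leg₁₂_symm_leg₂₃_comm hcomm, map_id_comp_eq_leg₂₃, map_symm_comp_id_eq_leg₁₂_symm]
  · have frobenius := LinearMap.congr_fun hV.2.2.2 (T x)
    simp only [LinearMap.comp_apply, LinearEquiv.coe_coe] at frobenius ⊢
    rw [frobenius, hcomul.comul_right, hmul.symm_mul_left, LinearEquiv.symm_apply_apply,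
      ← leg₁₂_leg₂₃_symm_comm hcomm, map_comp_id_eq_leg₁₂, map_id_symm_comp_eq_leg₂₃_symm]

end LegOperators

section TwistedTensor

variable {k A B : Type*} [Field k] [AddCommGroup A] [Module k A] [AddCommGroup B] [Module k B]
  {mulA : A ⊗[k] A →ₗ[k] A} {unitA : k →ₗ[k] A} {comulA : A →ₗ[k] A ⊗[k] A} {counitA : A →ₗ[k] k}
  {mulB : B ⊗[k] B →ₗ[k] B} {unitB : k →ₗ[k] B} {comulB : B →ₗ[k] B ⊗[k] B} {counitB : B →ₗ[k] k}

lemma midMap_comm {X P Q Y : Type*} [AddCommGroup X] [Module k X] [AddCommGroup P] [Module k P]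
    [AddCommGroup Q] [Module k Q] [AddCommGroup Y] [Module k Y] :
    midMap k (comm k P Q).toLinearMap = (tensorTensorTensorComm k X P Q Y).toLinearMap := by
  ext x p q y
  simp [midMap]

@[simp]
lemma tMul_comm_tmul (a a' : A) (b b' : B) :
    tMul k mulA mulB (comm k B A).toLinearMap ((a ⊗ₜ b) ⊗ₜ (a' ⊗ₜ b')) =
      mulA (a ⊗ₜ a') ⊗ₜ mulB (b ⊗ₜ b') := by
  simp [tMul, midMap_comm]

@[simp]
lemma tComul_comm_tmul (a : A) (b : B) :
    tComul k comulA comulB (comm k A B).toLinearMap (a ⊗ₜ b) =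
      tensorTensorTensorComm k A A B B (comulA a ⊗ₜ comulB b) := by
  simp [tComul, midMap_comm]

lemma IsUnitalAssoc.tensor (hA : IsUnitalAssoc k mulA unitA) (hB : IsUnitalAssoc k mulB unitB) :
    IsUnitalAssoc k (tMul k mulA mulB (comm k B A).toLinearMap) (tUnit k unitA unitB) := by
  refine ⟨?_, ?_, ?_⟩
  · ext a b
    have unitalA := LinearMap.congr_fun hA.1 a
    have unitalB := LinearMap.congr_fun hB.1 b
    simp_all [tUnit]
  · ext a b
    have unitalA := LinearMap.congr_fun hA.2.1 a
    have unitalB := LinearMap.congr_fun hB.2.1 b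
    simp_all [tUnit]
  · ext a b a' b' a'' b''
    have assocA := LinearMap.congr_fun hA.2.2 ((a ⊗ₜ a') ⊗ₜ a'')
    have assocB := LinearMap.congr_fun hB.2.2 ((b ⊗ₜ b') ⊗ₜ b'')
    simp_all

/-- The Mathlib coalgebra with the given structure maps, which gives access to the tensor product of
coalgebras. -/
abbrev IsCounitalCoassoc.toCoalgebra (hA : IsCounitalCoassoc k comulA counitA) :
    Coalgebra k A where
  comul := comulA
  counit := counitA
  coassoc := by
    ext a
    have coassoc := LinearMap.congr_fun hA.2.2 a
    exact (LinearEquiv.eq_symm_apply _).1 coassoc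
  rTensor_counit_comp_comul := by
    ext a
    exact (LinearEquiv.eq_symm_apply (lid k A)).2 (LinearMap.congr_fun hA.1 a)
  lTensor_counit_comp_comul := by
    ext a
    exact (LinearEquiv.eq_symm_apply (rid k A)).2 (LinearMap.congr_fun hA.2.1 a)

lemma IsCounitalCoassoc.of_coalgebra [Coalgebra k A] :
    IsCounitalCoassoc k (Coalgebra.comul (R := k) (A := A)) (Coalgebra.counit (R := k)) := by
  refine ⟨LinearMap.ext fun a => ?_, LinearMap.ext fun a => ?_, LinearMap.ext fun a => ?_⟩
  · exact (LinearEquiv.eq_symm_apply (lid k A)).1 (Coalgebra.rTensor_counit_comul (R := k) a)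
  · exact (LinearEquiv.eq_symm_apply (rid k A)).1 (Coalgebra.lTensor_counit_comul (R := k) a)
  · exact (LinearEquiv.eq_symm_apply _).2 (Coalgebra.coassoc_apply (R := k) a)

lemma IsCounitalCoassoc.tensor (hA : IsCounitalCoassoc k comulA counitA)
    (hB : IsCounitalCoassoc k comulB counitB) :
    IsCounitalCoassoc k (tComul k comulA comulB (comm k A B).toLinearMap)
      (tCounit k counitA counitB) := by
  let := hA.toCoalgebra
  let := hB.toCoalgebra
  have comul_eq : tComul k comulA comulB (comm k A B).toLinearMap =
      Coalgebra.comul (R := k) (A := A ⊗[k] B) := by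
    ext a b
    exact tComul_comm_tmul a b
  have counit_eq : tCounit k counitA counitB = Coalgebra.counit (R := k) (A := A ⊗[k] B) := by
    ext a b
    exact mul_comm (counitA a) (counitB b)
  rw [comul_eq, counit_eq]
  exact .of_coalgebra

lemma tensorTensorTensorComm_map_id_mul (x : A ⊗[k] A) (a : A) (y : B ⊗[k] B) (b : B) :
    tensorTensorTensorComm k A A B B
      (map .id mulA (assoc k A A A (x ⊗ₜ a)) ⊗ₜ map .id mulB (assoc k B B B (y ⊗ₜ b))) =
      map .id (tMul k mulA mulB (comm k B A).toLinearMap)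
        (assoc k _ _ _ (tensorTensorTensorComm k A A B B (x ⊗ₜ y) ⊗ₜ (a ⊗ₜ b))) := by
  induction x with
  | zero => simp
  | add x x' hx hx' => simp only [TensorProduct.add_tmul, map_add, hx, hx']
  | tmul a₁ a₂ =>
    induction y with
    | zero => simp
    | add y y' hy hy' =>
      simp only [TensorProduct.add_tmul, TensorProduct.tmul_add, map_add, hy, hy']
    | tmul b₁ b₂ => simp

lemma tensorTensorTensorComm_map_mul_id (a : A) (x : A ⊗[k] A) (b : B) (y : B ⊗[k] B) :
    tensorTensorTensorComm k A A B B
      (map mulA .id ((assoc k A A A).symm (a ⊗ₜ x)) ⊗ₜ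
        map mulB .id ((assoc k B B B).symm (b ⊗ₜ y))) =
      map (tMul k mulA mulB (comm k B A).toLinearMap) .id
        ((assoc k _ _ _).symm ((a ⊗ₜ b) ⊗ₜ tensorTensorTensorComm k A A B B (x ⊗ₜ y))) := by
  induction x with
  | zero => simp
  | add x x' hx hx' => simp only [TensorProduct.add_tmul, TensorProduct.tmul_add, map_add, hx, hx']
  | tmul a₁ a₂ =>
    induction y with
    | zero => simp
    | add y y' hy hy' => simp only [TensorProduct.tmul_add, map_add, hy, hy']
    | tmul b₁ b₂ => simp

theorem IsFrobenius.tensor (hA : IsFrobenius k mulA unitA comulA counitA)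
    (hB : IsFrobenius k mulB unitB comulB counitB) :
    IsFrobenius k (tMul k mulA mulB (comm k B A).toLinearMap) (tUnit k unitA unitB)
      (tComul k comulA comulB (comm k A B).toLinearMap) (tCounit k counitA counitB) := by
  refine ⟨hA.1.tensor hB.1, hA.2.1.tensor hB.2.1, ?_, ?_⟩
  · ext a b a' b'
    have frobeniusA := LinearMap.congr_fun hA.2.2.1 (a ⊗ₜ a')
    have frobeniusB := LinearMap.congr_fun hB.2.2.1 (b ⊗ₜ b')
    simp_all [tensorTensorTensorComm_map_id_mul]
  · ext a b a' b'
    have frobeniusA := LinearMap.congr_fun hA.2.2.2 (a ⊗ₜ a')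
    have frobeniusB := LinearMap.congr_fun hB.2.2.2 (b ⊗ₜ b')
    simp_all [tensorTensorTensorComm_map_mul_id]

variable (k A B) in
/-- The exchange `(a ⊗ b) ⊗ (a' ⊗ b') ↦ (a ⊗ b') ⊗ (a' ⊗ b)` of the two factors `B`. -/
noncomputable def exchangeRight : (A ⊗[k] B) ⊗[k] (A ⊗[k] B) ≃ₗ[k] (A ⊗[k] B) ⊗[k] (A ⊗[k] B) :=
  tensorTensorTensorComm k A B A B ≪≫ₗ (comm k B B).lTensor (A ⊗[k] A) ≪≫ₗ
    tensorTensorTensorComm k A A B B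

@[simp]
lemma exchangeRight_tmul (a a' : A) (b b' : B) :
    exchangeRight k A B ((a ⊗ₜ b) ⊗ₜ (a' ⊗ₜ b')) = (a ⊗ₜ b') ⊗ₜ (a' ⊗ₜ b) := rfl

/-- The operator `1 ⊗ στ ⊗ 1` on `(A ⊗ B) ⊗ (A ⊗ B)`, where `σ : A ⊗ B → B ⊗ A` is the flip: it
relates `1 ⊗ τ ⊗ 1` to the exchange of the inner factors of the untwisted structure maps. -/
noncomputable def twistOperator (τ : B ⊗[k] A ≃ₗ[k] A ⊗[k] B) :
    (A ⊗[k] B) ⊗[k] (A ⊗[k] B) ≃ₗ[k] (A ⊗[k] B) ⊗[k] (A ⊗[k] B) :=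
  exchangeRight k A B ≪≫ₗ (comm k A B ≪≫ₗ τ).lTensor (A ⊗[k] B) ≪≫ₗ exchangeRight k A B

/-- The extension `(τ ⊗ 1) (1 ⊗ τ) : B ⊗ B ⊗ A → A ⊗ B ⊗ B` of `τ`. -/
noncomputable def extendLeft (τ : B ⊗[k] A →ₗ[k] A ⊗[k] B) :
    (B ⊗[k] B) ⊗[k] A →ₗ[k] A ⊗[k] (B ⊗[k] B) :=
  (assoc k A B B).toLinearMap ∘ₗ map τ .id ∘ₗ (assoc k B A B).symm.toLinearMap ∘ₗ
    map .id τ ∘ₗ (assoc k B B A).toLinearMap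

/-- The extension `(1 ⊗ τ) (τ ⊗ 1) : B ⊗ A ⊗ A → A ⊗ A ⊗ B` of `τ`. -/
noncomputable def extendRight (τ : B ⊗[k] A →ₗ[k] A ⊗[k] B) :
    B ⊗[k] (A ⊗[k] A) →ₗ[k] (A ⊗[k] A) ⊗[k] B :=
  (assoc k A A B).symm.toLinearMap ∘ₗ map .id τ ∘ₗ (assoc k A B A).toLinearMap ∘ₗ
    map τ .id ∘ₗ (assoc k B A A).symm.toLinearMap

variable (k A B) in
/-- The permutation `(x ⊗ b) ⊗ (a ⊗ y) ↦ (x ∙ y) ⊗ (a ⊗ b)`, where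
`(a₁ ⊗ a₂) ∙ (b₁ ⊗ b₂) = (a₁ ⊗ b₁) ⊗ (a₂ ⊗ b₂)`. -/
noncomputable def assembleLeft :
    ((A ⊗[k] A) ⊗[k] B) ⊗[k] (A ⊗[k] (B ⊗[k] B)) →ₗ[k]
      ((A ⊗[k] B) ⊗[k] (A ⊗[k] B)) ⊗[k] (A ⊗[k] B) :=
  map (tensorTensorTensorComm k A A B B).toLinearMap (comm k B A).toLinearMap ∘ₗ
    (tensorTensorTensorComm k (A ⊗[k] A) B (B ⊗[k] B) A).toLinearMap ∘ₗ
      map .id (comm k A (B ⊗[k] B)).toLinearMap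

variable (k A B) in
/-- The permutation `(a ⊗ y) ⊗ (x ⊗ b) ↦ (a ⊗ b) ⊗ (x ∙ y)`, where
`(a₁ ⊗ a₂) ∙ (b₁ ⊗ b₂) = (a₁ ⊗ b₁) ⊗ (a₂ ⊗ b₂)`. -/
noncomputable def assembleRight :
    (A ⊗[k] (B ⊗[k] B)) ⊗[k] ((A ⊗[k] A) ⊗[k] B) →ₗ[k]
      ((A ⊗[k] B) ⊗[k] (A ⊗[k] B)) ⊗[k] (A ⊗[k] B) :=
  (assoc k _ _ _).symm.toLinearMap ∘ₗ
    map .id ((tensorTensorTensorComm k A A B B).toLinearMap ∘ₗ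
      (comm k (B ⊗[k] B) (A ⊗[k] A)).toLinearMap) ∘ₗ
    (tensorTensorTensorComm k A (B ⊗[k] B) B (A ⊗[k] A)).toLinearMap ∘ₗ
      map .id (comm k (A ⊗[k] A) B).toLinearMap

@[simp]
lemma assembleLeft_tmul (x : A ⊗[k] A) (b : B) (a : A) (y : B ⊗[k] B) :
    assembleLeft k A B ((x ⊗ₜ b) ⊗ₜ (a ⊗ₜ y)) =
      tensorTensorTensorComm k A A B B (x ⊗ₜ y) ⊗ₜ (a ⊗ₜ b) := rfl

@[simp]
lemma assembleRight_tmul (a : A) (y : B ⊗[k] B) (x : A ⊗[k] A) (b : B) :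
    assembleRight k A B ((a ⊗ₜ y) ⊗ₜ (x ⊗ₜ b)) =
      (assoc k _ _ _).symm ((a ⊗ₜ b) ⊗ₜ tensorTensorTensorComm k A A B B (x ⊗ₜ y)) := rfl

variable {τ : B ⊗[k] A ≃ₗ[k] A ⊗[k] B}

@[simp]
lemma twistOperator_tmul (a a' : A) (b b' : B) :
    twistOperator τ ((a ⊗ₜ b) ⊗ₜ (a' ⊗ₜ b')) =
      exchangeRight k A B ((a ⊗ₜ b') ⊗ₜ τ (b ⊗ₜ a')) := rfl

lemma midMap_eq_twistOperator :
    midMap k τ.toLinearMap =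
      (tensorTensorTensorComm k A B A B).toLinearMap ∘ₗ (twistOperator τ).toLinearMap := by
  ext a b a' b'
  have key (z : A ⊗[k] B) :
      assoc k (A ⊗[k] A) B B (map (assoc k A A B).symm.toLinearMap .id ((a ⊗ₜ z) ⊗ₜ b')) =
        tensorTensorTensorComm k A B A B (exchangeRight k A B ((a ⊗ₜ b') ⊗ₜ z)) := by
    induction z with
    | zero => simp
    | tmul c d => simp
    | add z z' hz hz' =>
      simp only [TensorProduct.add_tmul, TensorProduct.tmul_add, map_add, hz, hz']
  simpa [midMap] using key (τ (b ⊗ₜ a'))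

lemma tMul_eq_comp_twistOperator :
    tMul k mulA mulB τ.toLinearMap =
      tMul k mulA mulB (comm k B A).toLinearMap ∘ₗ (twistOperator τ).toLinearMap := by
  rw [tMul, tMul, midMap_comm, midMap_eq_twistOperator]
  rfl

lemma midMap_comp_midMap {X P Q Y R S M N : Type*}
    [AddCommGroup X] [Module k X] [AddCommGroup P] [Module k P]
    [AddCommGroup Q] [Module k Q] [AddCommGroup Y] [Module k Y]
    [AddCommGroup R] [Module k R] [AddCommGroup S] [Module k S]
    [AddCommGroup M] [Module k M] [AddCommGroup N] [Module k N]
    (g : R ⊗[k] S →ₗ[k] M ⊗[k] N) (f : P ⊗[k] Q →ₗ[k] R ⊗[k] S) :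
    midMap (X := X) (Y := Y) k g ∘ₗ midMap k f = midMap k (g ∘ₗ f) := by
  ext x p q y
  simp [midMap]

lemma midMap_id {X P Q Y : Type*} [AddCommGroup X] [Module k X] [AddCommGroup P] [Module k P]
    [AddCommGroup Q] [Module k Q] [AddCommGroup Y] [Module k Y] :
    midMap (X := X) (Y := Y) k (.id : P ⊗[k] Q →ₗ[k] P ⊗[k] Q) = .id := by
  ext x p q y
  simp [midMap]

lemma tComul_eq_twistOperator_symm_comp :
    tComul k comulA comulB τ.symm.toLinearMap =
      (twistOperator τ).symm.toLinearMap ∘ₗ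
        tComul k comulA comulB (comm k A B).toLinearMap := by
  have inverse (x : (A ⊗[k] A) ⊗[k] (B ⊗[k] B)) :
      twistOperator τ (midMap k τ.symm.toLinearMap x) = tensorTensorTensorComm k A A B B x := by
    have cancel := LinearMap.congr_fun
      (midMap_comp_midMap (X := A) (Y := B) τ.toLinearMap τ.symm.toLinearMap) x
    rw [LinearEquiv.comp_symm, midMap_id, midMap_eq_twistOperator] at cancel
    exact (LinearEquiv.eq_symm_apply (tensorTensorTensorComm k A B A B)).2 cancel
  rw [tComul, tComul, midMap_comm]
  ext1
  ext a b
  simp [← inverse]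

lemma leg₁₂_twistOperator_exchangeRight (a a' : A) (b b'' : B) (z : A ⊗[k] B) :
    leg₁₂ (twistOperator τ)
        ((assoc k _ _ _).symm ((a ⊗ₜ b) ⊗ₜ exchangeRight k A B ((a' ⊗ₜ b'') ⊗ₜ z))) =
      leg₂₃ (exchangeRight k A B)
        (leg₁₂ (exchangeRight k A B) (((a ⊗ₜ b'') ⊗ₜ τ (b ⊗ₜ a')) ⊗ₜ z)) := by
  induction z with
  | zero => simp
  | add z z' hz hz' => simp only [TensorProduct.tmul_add, map_add, hz, hz']
  | tmul c d =>
    have exchange (w : A ⊗[k] B) :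
        exchangeRight k A B ((a ⊗ₜ d) ⊗ₜ w) ⊗ₜ (c ⊗ₜ b'') =
          leg₂₃ (exchangeRight k A B)
            (exchangeRight k A B ((a ⊗ₜ b'') ⊗ₜ w) ⊗ₜ (c ⊗ₜ d)) := by
      induction w with
      | zero => simp
      | add w w' hw hw' =>
        simp only [TensorProduct.tmul_add, TensorProduct.add_tmul, map_add, hw, hw']
      | tmul e f => simp
    simp [exchange]

lemma leg₂₃_twistOperator_exchangeRight (a a'' : A) (b' b'' : B) (z : A ⊗[k] B) :
    leg₂₃ (twistOperator τ) (exchangeRight k A B ((a ⊗ₜ b') ⊗ₜ z) ⊗ₜ (a'' ⊗ₜ b'')) =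
      leg₂₃ (exchangeRight k A B)
        (leg₁₂ (exchangeRight k A B) (((a ⊗ₜ b'') ⊗ₜ z) ⊗ₜ τ (b' ⊗ₜ a''))) := by
  induction z with
  | zero => simp
  | add z z' hz hz' =>
    simp only [TensorProduct.tmul_add, TensorProduct.add_tmul, map_add, hz, hz']
  | tmul c d => simp

lemma leg₁₂_leg₂₃_twistOperator_comm (x : ((A ⊗[k] B) ⊗[k] (A ⊗[k] B)) ⊗[k] (A ⊗[k] B)) :
    leg₁₂ (twistOperator τ) (leg₂₃ (twistOperator τ) x) =
      leg₂₃ (twistOperator τ) (leg₁₂ (twistOperator τ) x) := by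
  refine LinearMap.congr_fun
    (f := (leg₁₂ (twistOperator τ)).toLinearMap ∘ₗ (leg₂₃ (twistOperator τ)).toLinearMap)
    (g := (leg₂₃ (twistOperator τ)).toLinearMap ∘ₗ (leg₁₂ (twistOperator τ)).toLinearMap) ?_ x
  ext a b a' b' a'' b''
  simp [leg₁₂_twistOperator_exchangeRight, leg₂₃_twistOperator_exchangeRight]

lemma leg₁₃_leg₂₃_twistOperator (x : A ⊗[k] A) (y : B ⊗[k] B) (a : A) (b : B) :
    leg₁₃ (twistOperator τ) (leg₂₃ (twistOperator τ)
        (tensorTensorTensorComm k A A B B (x ⊗ₜ y) ⊗ₜ (a ⊗ₜ b))) =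
      assembleLeft k A B ((x ⊗ₜ b) ⊗ₜ extendLeft τ.toLinearMap (y ⊗ₜ a)) := by
  induction x with
  | zero => simp
  | add x x' hx hx' => simp only [TensorProduct.add_tmul, map_add, hx, hx']
  | tmul a₁ a₂ =>
    induction y with
    | zero => simp
    | add y y' hy hy' =>
      simp only [TensorProduct.tmul_add, TensorProduct.add_tmul, map_add, hy, hy']
    | tmul b₁ b₂ =>
      have assemble (z : A ⊗[k] B) (d : B) :
          rightComm k _ _ _ (exchangeRight k A B ((a₁ ⊗ₜ b) ⊗ₜ z) ⊗ₜ (a₂ ⊗ₜ d)) =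
            assembleLeft k A B (((a₁ ⊗ₜ a₂) ⊗ₜ b) ⊗ₜ assoc k A B B (z ⊗ₜ d)) := by
        induction z with
        | zero => simp
        | add z z' hz hz' =>
          simp only [TensorProduct.tmul_add, TensorProduct.add_tmul, map_add, hz, hz']
        | tmul e f => simp
      have leg₁₃_eq (w : A ⊗[k] B) :
          leg₁₃ (twistOperator τ)
              ((assoc k _ _ _).symm ((a₁ ⊗ₜ b₁) ⊗ₜ exchangeRight k A B ((a₂ ⊗ₜ b) ⊗ₜ w))) =
            assembleLeft k A B (((a₁ ⊗ₜ a₂) ⊗ₜ b) ⊗ₜ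
              assoc k A B B (map τ.toLinearMap .id ((assoc k B A B).symm (b₁ ⊗ₜ w)))) := by
        induction w with
        | zero => simp
        | add w w' hw hw' => simp only [TensorProduct.tmul_add, map_add, hw, hw']
        | tmul c d => simp [assemble]
      simp [extendLeft, leg₁₃_eq]

lemma leg₁₃_leg₁₂_twistOperator (a : A) (b : B) (x : A ⊗[k] A) (y : B ⊗[k] B) :
    leg₁₃ (twistOperator τ) (leg₁₂ (twistOperator τ)
        ((assoc k _ _ _).symm ((a ⊗ₜ b) ⊗ₜ tensorTensorTensorComm k A A B B (x ⊗ₜ y)))) =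
      assembleRight k A B ((a ⊗ₜ y) ⊗ₜ extendRight τ.toLinearMap (b ⊗ₜ x)) := by
  induction x with
  | zero => simp
  | add x x' hx hx' => simp only [TensorProduct.add_tmul, TensorProduct.tmul_add, map_add, hx, hx']
  | tmul a₁ a₂ =>
    induction y with
    | zero => simp
    | add y y' hy hy' =>
      simp only [TensorProduct.tmul_add, TensorProduct.add_tmul, map_add, hy, hy']
    | tmul b₁ b₂ =>
      have assemble (z : A ⊗[k] B) (c : A) :
          rightComm k _ _ _ (exchangeRight k A B ((a ⊗ₜ b₂) ⊗ₜ z) ⊗ₜ (c ⊗ₜ b₁)) =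
            assembleRight k A B ((a ⊗ₜ (b₁ ⊗ₜ b₂)) ⊗ₜ (assoc k A A B).symm (c ⊗ₜ z)) := by
        induction z with
        | zero => simp
        | add z z' hz hz' =>
          simp only [TensorProduct.tmul_add, TensorProduct.add_tmul, map_add, hz, hz']
        | tmul e f => simp
      have leg₁₃_eq (w : A ⊗[k] B) :
          leg₁₃ (twistOperator τ) (exchangeRight k A B ((a ⊗ₜ b₁) ⊗ₜ w) ⊗ₜ (a₂ ⊗ₜ b₂)) =
            assembleRight k A B ((a ⊗ₜ (b₁ ⊗ₜ b₂)) ⊗ₜ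
              (assoc k A A B).symm (map .id τ.toLinearMap (assoc k A B A (w ⊗ₜ a₂)))) := by
        induction w with
        | zero => simp
        | add w w' hw hw' =>
          simp only [TensorProduct.tmul_add, TensorProduct.add_tmul, map_add, hw, hw']
        | tmul c d => simp [assemble]
      simp [extendRight, leg₁₃_eq]

@[simp]
lemma tMul_comm_tensorTensorTensorComm (x : A ⊗[k] A) (y : B ⊗[k] B) :
    tMul k mulA mulB (comm k B A).toLinearMap (tensorTensorTensorComm k A A B B (x ⊗ₜ y)) =
      mulA x ⊗ₜ mulB y := by
  rw [tMul, midMap_comm]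
  exact congrArg (map mulA mulB) ((tensorTensorTensorComm k A B A B).apply_symm_apply (x ⊗ₜ y))

lemma map_tMul_assembleLeft (x : A ⊗[k] A) (b : B) (w : A ⊗[k] (B ⊗[k] B)) :
    map (tMul k mulA mulB (comm k B A).toLinearMap) .id (assembleLeft k A B ((x ⊗ₜ b) ⊗ₜ w)) =
      exchangeRight k A B ((mulA x ⊗ₜ b) ⊗ₜ map .id mulB w) := by
  induction w with
  | zero => simp
  | add w w' hw hw' => simp only [TensorProduct.tmul_add, map_add, hw, hw']
  | tmul a y => simp

lemma map_tMul_assembleRight (a : A) (y : B ⊗[k] B) (w : (A ⊗[k] A) ⊗[k] B) :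
    map .id (tMul k mulA mulB (comm k B A).toLinearMap)
        (assoc k _ _ _ (assembleRight k A B ((a ⊗ₜ y) ⊗ₜ w))) =
      exchangeRight k A B ((a ⊗ₜ mulB y) ⊗ₜ map mulA .id w) := by
  induction w with
  | zero => simp
  | add w w' hw hw' => simp only [TensorProduct.tmul_add, map_add, hw, hw']
  | tmul x b => simp

lemma map_tComul_exchangeRight (a : A) (b : B) (z : A ⊗[k] B) :
    map (tComul k comulA comulB (comm k A B).toLinearMap) .id
        (exchangeRight k A B ((a ⊗ₜ b) ⊗ₜ z)) =
      assembleLeft k A B ((comulA a ⊗ₜ b) ⊗ₜ map .id comulB z) := by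
  induction z with
  | zero => simp
  | add z z' hz hz' => simp only [TensorProduct.tmul_add, map_add, hz, hz']
  | tmul c d => simp

lemma symm_assoc_map_tComul_exchangeRight (a : A) (b : B) (z : A ⊗[k] B) :
    (assoc k _ _ _).symm (map .id (tComul k comulA comulB (comm k A B).toLinearMap)
        (exchangeRight k A B ((a ⊗ₜ b) ⊗ₜ z))) =
      assembleRight k A B ((a ⊗ₜ comulB b) ⊗ₜ map comulA .id z) := by
  induction z with
  | zero => simp
  | add z z' hz hz' => simp only [TensorProduct.tmul_add, map_add, hz, hz']
  | tmul c d => simp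

lemma isCoalgebraTwist_twistOperator (hA : MidACompat k comulA τ.toLinearMap)
    (hB : MidBCompat k comulB τ.toLinearMap) :
    IsCoalgebraTwist (tComul k comulA comulB (comm k A B).toLinearMap) (twistOperator τ) where
  comul_left x := by
    refine LinearMap.congr_fun (f := map (tComul k comulA comulB (comm k A B).toLinearMap) .id ∘ₗ
      (twistOperator τ).toLinearMap) (g := (leg₁₃ (twistOperator τ)).toLinearMap ∘ₗ
      (leg₂₃ (twistOperator τ)).toLinearMap ∘ₗ
      map (tComul k comulA comulB (comm k A B).toLinearMap) .id) ?_ x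
    ext a b a' b'
    have compat : map .id comulB (τ (b ⊗ₜ a')) = extendLeft τ.toLinearMap (comulB b ⊗ₜ a') :=
      LinearMap.congr_fun hB (b ⊗ₜ a')
    simp [map_tComul_exchangeRight, leg₁₃_leg₂₃_twistOperator, compat]
  comul_right x := by
    refine LinearMap.congr_fun (f := (assoc k _ _ _).symm.toLinearMap ∘ₗ
      map .id (tComul k comulA comulB (comm k A B).toLinearMap) ∘ₗ
      (twistOperator τ).toLinearMap) (g := (leg₁₃ (twistOperator τ)).toLinearMap ∘ₗ
      (leg₁₂ (twistOperator τ)).toLinearMap ∘ₗ (assoc k _ _ _).symm.toLinearMap ∘ₗ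
      map .id (tComul k comulA comulB (comm k A B).toLinearMap)) ?_ x
    ext a b a' b'
    have compat : map comulA .id (τ (b ⊗ₜ a')) = extendRight τ.toLinearMap (b ⊗ₜ comulA a') :=
      LinearMap.congr_fun hA (b ⊗ₜ a')
    simp [symm_assoc_map_tComul_exchangeRight, leg₁₃_leg₁₂_twistOperator, compat]

lemma IsTwisting.apply_unitA {τ : B ⊗[k] A →ₗ[k] A ⊗[k] B}
    (hτ : IsTwisting k mulA unitA mulB unitB τ) (b : B) :
    τ (b ⊗ₜ unitA 1) = unitA 1 ⊗ₜ b := by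
  simpa using LinearMap.congr_fun hτ.1 (b ⊗ₜ 1)

lemma IsTwisting.apply_unitB {τ : B ⊗[k] A →ₗ[k] A ⊗[k] B}
    (hτ : IsTwisting k mulA unitA mulB unitB τ) (a : A) :
    τ (unitB 1 ⊗ₜ a) = a ⊗ₜ unitB 1 := by
  simpa using LinearMap.congr_fun hτ.2.1 (1 ⊗ₜ a)

lemma IsTwisting.apply_mulB {τ : B ⊗[k] A →ₗ[k] A ⊗[k] B}
    (hτ : IsTwisting k mulA unitA mulB unitB τ) (hA : IsUnitalAssoc k mulA unitA)
    (y : B ⊗[k] B) (a : A) :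
    τ (mulB y ⊗ₜ a) = map .id mulB (extendLeft τ (y ⊗ₜ a)) := by
  have mul_unit (a : A) : mulA (a ⊗ₜ unitA 1) = a := by
    simpa using LinearMap.congr_fun hA.2.1 a
  have multiply (z : A ⊗[k] B) (d : B) :
      map mulA mulB (midMap k τ (z ⊗ₜ (unitA 1 ⊗ₜ d))) = map .id mulB (assoc k A B B (z ⊗ₜ d)) := by
    induction z with
    | zero => simp
    | add z z' hz hz' => simp only [TensorProduct.add_tmul, map_add, hz, hz']
    | tmul c e => simp [midMap, hτ.apply_unitA, mul_unit]
  have exchange (b : B) (z : A ⊗[k] B) :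
      map mulA mulB (midMap k τ (map τ τ
        (assoc k _ _ _ (map (assoc k B A B).symm.toLinearMap .id ((b ⊗ₜ z) ⊗ₜ unitA 1))))) =
        map .id mulB (assoc k A B B (map τ .id ((assoc k B A B).symm (b ⊗ₜ z)))) := by
    induction z with
    | zero => simp
    | add z z' hz hz' =>
      simp only [TensorProduct.tmul_add, TensorProduct.add_tmul, map_add, hz, hz']
    | tmul c d => simp [hτ.apply_unitA, multiply]
  induction y with
  | zero => simp
  | add y y' hy hy' => simp only [TensorProduct.add_tmul, map_add, hy, hy']
  | tmul b b' =>
    have twisting := LinearMap.congr_fun hτ.2.2 ((b ⊗ₜ b') ⊗ₜ (a ⊗ₜ unitA 1))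
    calc τ (mulB (b ⊗ₜ b') ⊗ₜ a)
        = τ (mulB (b ⊗ₜ b') ⊗ₜ mulA (a ⊗ₜ unitA 1)) := by rw [mul_unit]
      _ = map .id mulB (extendLeft τ ((b ⊗ₜ b') ⊗ₜ a)) :=
        twisting.trans (by simpa [midMap, extendLeft] using exchange b (τ (b' ⊗ₜ a)))

lemma IsTwisting.apply_mulA {τ : B ⊗[k] A →ₗ[k] A ⊗[k] B}
    (hτ : IsTwisting k mulA unitA mulB unitB τ) (hB : IsUnitalAssoc k mulB unitB)
    (b : B) (x : A ⊗[k] A) :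
    τ (b ⊗ₜ mulA x) = map mulA .id (extendRight τ (b ⊗ₜ x)) := by
  have unit_mul (b : B) : mulB (unitB 1 ⊗ₜ b) = b := by
    simpa using LinearMap.congr_fun hB.1 b
  have multiply (c : A) (z : A ⊗[k] B) :
      map mulA mulB (midMap k τ ((c ⊗ₜ unitB 1) ⊗ₜ z)) =
        map mulA .id ((assoc k A A B).symm (c ⊗ₜ z)) := by
    induction z with
    | zero => simp
    | add z z' hz hz' => simp only [TensorProduct.tmul_add, map_add, hz, hz']
    | tmul d e => simp [midMap, hτ.apply_unitB, unit_mul]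
  have exchange (z : A ⊗[k] B) (a : A) :
      map mulA mulB (midMap k τ (map τ τ
        (assoc k _ _ _ (map (assoc k B A B).symm.toLinearMap .id ((unitB 1 ⊗ₜ z) ⊗ₜ a))))) =
        map mulA .id ((assoc k A A B).symm (map .id τ (assoc k A B A (z ⊗ₜ a)))) := by
    induction z with
    | zero => simp
    | add z z' hz hz' =>
      simp only [TensorProduct.tmul_add, TensorProduct.add_tmul, map_add, hz, hz']
    | tmul c d => simp [hτ.apply_unitB, multiply]
  induction x with
  | zero => simp
  | add x x' hx hx' => simp only [TensorProduct.tmul_add, map_add, hx, hx']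
  | tmul a a' =>
    have twisting := LinearMap.congr_fun hτ.2.2 ((unitB 1 ⊗ₜ b) ⊗ₜ (a ⊗ₜ a'))
    calc τ (b ⊗ₜ mulA (a ⊗ₜ a'))
        = τ (mulB (unitB 1 ⊗ₜ b) ⊗ₜ mulA (a ⊗ₜ a')) := by rw [unit_mul]
      _ = map mulA .id (extendRight τ (b ⊗ₜ (a ⊗ₜ a'))) :=
        twisting.trans (by simpa [midMap, extendRight] using exchange (τ (b ⊗ₜ a)) a')

lemma isAlgebraTwist_twistOperator (hA : IsUnitalAssoc k mulA unitA)
    (hB : IsUnitalAssoc k mulB unitB) (hτ : IsTwisting k mulA unitA mulB unitB τ.toLinearMap) :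
    IsAlgebraTwist (tMul k mulA mulB (comm k B A).toLinearMap) (tUnit k unitA unitB)
      (twistOperator τ) where
  unit_left v := by
    have apply_unit (a : A) : τ (unitB 1 ⊗ₜ a) = a ⊗ₜ unitB 1 := hτ.apply_unitB a
    induction v with
    | zero => simp
    | add v v' hv hv' => simp only [TensorProduct.tmul_add, map_add, hv, hv']
    | tmul a b => simp [tUnit, apply_unit]
  unit_right v := by
    have apply_unit (b : B) : τ (b ⊗ₜ unitA 1) = unitA 1 ⊗ₜ b := hτ.apply_unitA b
    induction v with
    | zero => simp
    | add v v' hv hv' => simp only [TensorProduct.add_tmul, map_add, hv, hv']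
    | tmul a b => simp [tUnit, apply_unit]
  mul_left x := by
    refine LinearMap.congr_fun (f := (twistOperator τ).toLinearMap ∘ₗ
      map (tMul k mulA mulB (comm k B A).toLinearMap) .id) (g :=
      map (tMul k mulA mulB (comm k B A).toLinearMap) .id ∘ₗ
      (leg₁₃ (twistOperator τ)).toLinearMap ∘ₗ (leg₂₃ (twistOperator τ)).toLinearMap) ?_ x
    ext a b a' b' a'' b''
    have legs := leg₁₃_leg₂₃_twistOperator (τ := τ) (a ⊗ₜ a') (b ⊗ₜ b') a'' b''
    have apply_mul : τ (mulB (b ⊗ₜ b') ⊗ₜ a'') = _ := hτ.apply_mulB hA (b ⊗ₜ b') a''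
    simp_all [map_tMul_assembleLeft]
  mul_right x := by
    refine LinearMap.congr_fun (f := (twistOperator τ).toLinearMap ∘ₗ
      map .id (tMul k mulA mulB (comm k B A).toLinearMap) ∘ₗ (assoc k _ _ _).toLinearMap) (g :=
      map .id (tMul k mulA mulB (comm k B A).toLinearMap) ∘ₗ (assoc k _ _ _).toLinearMap ∘ₗ
      (leg₁₃ (twistOperator τ)).toLinearMap ∘ₗ (leg₁₂ (twistOperator τ)).toLinearMap) ?_ x
    ext a b a' b' a'' b''
    have legs := leg₁₃_leg₁₂_twistOperator (τ := τ) a b (a' ⊗ₜ a'') (b' ⊗ₜ b'')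
    have apply_mul : τ (b ⊗ₜ mulA (a' ⊗ₜ a'')) = _ := hτ.apply_mulA hB b (a' ⊗ₜ a'')
    simp_all [map_tMul_assembleRight]

theorem IsFrobenius.twistedTensor (hA : IsFrobenius k mulA unitA comulA counitA)
    (hB : IsFrobenius k mulB unitB comulB counitB)
    (hτ : IsTwisting k mulA unitA mulB unitB τ.toLinearMap)
    (hcomulA : MidACompat k comulA τ.toLinearMap) (hcomulB : MidBCompat k comulB τ.toLinearMap) :
    IsFrobenius k (tMul k mulA mulB τ.toLinearMap) (tUnit k unitA unitB)
      (tComul k comulA comulB τ.symm.toLinearMap) (tCounit k counitA counitB) := by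
  rw [tMul_eq_comp_twistOperator, tComul_eq_twistOperator_symm_comp]
  exact (hA.tensor hB).twist (isAlgebraTwist_twistOperator hA.1 hB.1 hτ)
    (isCoalgebraTwist_twistOperator hcomulA hcomulB) leg₁₂_leg₂₃_twistOperator_comm

end TwistedTensor

section Graded

lemma tensorProduct_ext_of_iSup_eq_top {R M N P ι κ : Type*} [CommSemiring R]
    [AddCommMonoid M] [Module R M] [AddCommMonoid N] [Module R N] [AddCommMonoid P] [Module R P]
    {ℳ : ι → Submodule R M} {𝒩 : κ → Submodule R N} (hℳ : ⨆ i, ℳ i = ⊤) (h𝒩 : ⨆ j, 𝒩 j = ⊤)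
    {f g : M ⊗[R] N →ₗ[R] P} (h : ∀ i j, ∀ m ∈ ℳ i, ∀ n ∈ 𝒩 j, f (m ⊗ₜ n) = g (m ⊗ₜ n)) :
    f = g := by
  refine TensorProduct.ext' fun m n => ?_
  have hm : m ∈ ⨆ i, ℳ i := hℳ ▸ Submodule.mem_top
  have hn : n ∈ ⨆ j, 𝒩 j := h𝒩 ▸ Submodule.mem_top
  induction hm using Submodule.iSup_induction' with
  | zero => simp
  | add m m' _ _ ih ih' => simp only [TensorProduct.add_tmul, map_add, ih, ih']
  | mem i m hm =>
    induction hn using Submodule.iSup_induction' with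
    | zero => simp
    | add n n' _ _ ih ih' => simp only [TensorProduct.tmul_add, map_add, ih, ih']
    | mem j n hn => exact h i j m hm n hn

variable {k A B F G : Type*} [Field k] [AddCommGroup A] [Module k A] [AddCommGroup B] [Module k B]
  {𝒜 : F → Submodule k A} {ℬ : G → Submodule k B}

lemma ComulGradedOfDegree.congr_apply [AddCommGroup F] {comulA : A →ₗ[k] A ⊗[k] A} {d : F}
    (hΔ : ComulGradedOfDegree k 𝒜 comulA d) {M : Type*} [AddCommGroup M] [Module k M]
    {L R : A ⊗[k] A →ₗ[k] M} {f : F}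
    (h : ∀ f₁ f₂, f₁ + f₂ = f + d → ∀ a₁ ∈ 𝒜 f₁, ∀ a₂ ∈ 𝒜 f₂, L (a₁ ⊗ₜ a₂) = R (a₁ ⊗ₜ a₂))
    {a : A} (ha : a ∈ 𝒜 f) : L (comulA a) = R (comulA a) := by
  suffices span_le : ⨆ (p : F × F) (_ : p.1 + p.2 = f + d),
      LinearMap.range (map (𝒜 p.1).subtype (𝒜 p.2).subtype) ≤ LinearMap.eqLocus L R from
    span_le (hΔ f a ha)
  refine iSup₂_le fun p hp => LinearMap.range_le_iff_comap.2 (Submodule.eq_top_iff'.2 fun x => ?_)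
  induction x with
  | zero => simp
  | add x x' hx hx' => exact Submodule.add_mem _ hx hx'
  | tmul a₁ a₂ => exact h _ _ hp a₁ a₁.2 a₂ a₂.2

variable {τ : B ⊗[k] A →ₗ[k] A ⊗[k] B} {s : F → G → k}

lemma ComulGradedOfDegree.midACompat [AddCommGroup F] {comulA : A →ₗ[k] A ⊗[k] A} {d : F}
    (hΔ : ComulGradedOfDegree k 𝒜 comulA d) (h𝒜 : ⨆ f, 𝒜 f = ⊤) (hℬ : ⨆ g, ℬ g = ⊤)
    (hτ : ∀ f g, ∀ a ∈ 𝒜 f, ∀ b ∈ ℬ g, τ (b ⊗ₜ a) = s f g • (a ⊗ₜ b))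
    (hs : ∀ f f' g, s (f + f') g = s f g * s f' g) (hd : ∀ g, s d g = 1) :
    MidACompat k comulA τ := by
  refine tensorProduct_ext_of_iSup_eq_top hℬ h𝒜 fun g f b hb a ha => ?_
  have homogeneous : s f g • (comulA a ⊗ₜ b) = extendRight τ (b ⊗ₜ comulA a) := by
    refine hΔ.congr_apply (L := s f g • (TensorProduct.mk k (A ⊗[k] A) B).flip b)
      (R := extendRight τ ∘ₗ TensorProduct.mk k B (A ⊗[k] A) b) (fun f₁ f₂ hf a₁ h₁ a₂ h₂ => ?_) ha
    have weight : s f g = s f₁ g * s f₂ g := by rw [← hs, hf, hs, hd, mul_one]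
    simp [extendRight, hτ f₁ g a₁ h₁ b hb, hτ f₂ g a₂ h₂ b hb, ← TensorProduct.smul_tmul',
      smul_smul, weight]
  simpa [extendRight, hτ f g a ha b hb] using homogeneous

lemma ComulGradedOfDegree.midBCompat [AddCommGroup G] {comulB : B →ₗ[k] B ⊗[k] B} {d : G}
    (hΔ : ComulGradedOfDegree k ℬ comulB d) (h𝒜 : ⨆ f, 𝒜 f = ⊤) (hℬ : ⨆ g, ℬ g = ⊤)
    (hτ : ∀ f g, ∀ a ∈ 𝒜 f, ∀ b ∈ ℬ g, τ (b ⊗ₜ a) = s f g • (a ⊗ₜ b))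
    (hs : ∀ f g g', s f (g + g') = s f g * s f g') (hd : ∀ f, s f d = 1) :
    MidBCompat k comulB τ := by
  refine tensorProduct_ext_of_iSup_eq_top hℬ h𝒜 fun g f b hb a ha => ?_
  have homogeneous : s f g • (a ⊗ₜ comulB b) = extendLeft τ (comulB b ⊗ₜ a) := by
    refine hΔ.congr_apply (L := s f g • TensorProduct.mk k A (B ⊗[k] B) a)
      (R := extendLeft τ ∘ₗ (TensorProduct.mk k (B ⊗[k] B) A).flip a)
      (fun g₁ g₂ hg b₁ h₁ b₂ h₂ => ?_) hb
    have weight : s f g = s f g₂ * s f g₁ := by rw [mul_comm, ← hs, hg, hs, hd, mul_one]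
    simp [extendLeft, hτ f g₁ a ha b₁ h₁, hτ f g₂ a ha b₂ h₂, ← TensorProduct.smul_tmul',
      smul_smul, weight]
  simpa [extendLeft, hτ f g a ha b hb] using homogeneous

end Graded

end TTP

open TTP in
theorem bicharacter_twist_isFrobenius_of_degree_zero_general
    {k A B F G : Type*} [Field k]
    [AddCommGroup A] [Module k A] [AddCommGroup B] [Module k B]
    [AddCommGroup F] [AddCommGroup G]
    {𝒜 : F → Submodule k A} {ℬ : G → Submodule k B}
    (h𝒜 : ⨆ f, 𝒜 f = ⊤) (hℬ : ⨆ g, ℬ g = ⊤)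
    {mulA : A ⊗[k] A →ₗ[k] A} {unitA : k →ₗ[k] A}
    {comulA : A →ₗ[k] A ⊗[k] A} {counitA : A →ₗ[k] k}
    {mulB : B ⊗[k] B →ₗ[k] B} {unitB : k →ₗ[k] B}
    {comulB : B →ₗ[k] B ⊗[k] B} {counitB : B →ₗ[k] k}
    (hA : IsFrobenius k mulA unitA comulA counitA)
    (hB : IsFrobenius k mulB unitB comulB counitB)
    {dA : F} {dB : G}
    (hΔA : ComulGradedOfDegree k 𝒜 comulA dA) (hΔB : ComulGradedOfDegree k ℬ comulB dB)
    {t : (F ⊗[ℤ] G) →+ Additive kˣ}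
    (htA : ∀ g, t (dA ⊗ₜ[ℤ] g) = 0) (htB : ∀ f, t (f ⊗ₜ[ℤ] dB) = 0)
    {τ : B ⊗[k] A ≃ₗ[k] A ⊗[k] B}
    (hτ : ∀ (f : F) (g : G), ∀ a ∈ 𝒜 f, ∀ b ∈ ℬ g,
      τ (b ⊗ₜ[k] a) = ((Additive.toMul (t (f ⊗ₜ[ℤ] g)) : kˣ) : k) • (a ⊗ₜ[k] b))
    (hτtwist : IsTwisting k mulA unitA mulB unitB τ.toLinearMap) :
    IsFrobenius k (tMul k mulA mulB τ.toLinearMap) (tUnit k unitA unitB)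
        (tComul k comulA comulB τ.symm.toLinearMap) (tCounit k counitA counitB) := by
  let s (f : F) (g : G) : k := (t (f ⊗ₜ[ℤ] g)).toMul
  have s_add_left (f f' : F) (g : G) : s (f + f') g = s f g * s f' g := by
    simp [s, TensorProduct.add_tmul]
  have s_add_right (f : F) (g g' : G) : s f (g + g') = s f g * s f g' := by
    simp [s, TensorProduct.tmul_add]
  refine hA.twistedTensor hB hτtwist ?_ ?_
  · exact hΔA.midACompat h𝒜 hℬ hτ s_add_left fun g => by simp [htA]
  · exact hΔB.midBCompat h𝒜 hℬ hτ s_add_right fun f => by simp [htB]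

open TTP in
/-- Corollary 6.4 of the paper: the twisted tensor product
`A ⊗^t B` of graded Frobenius algebras whose comultiplications are graded of
degree `0`, along the twist by a bicharacter `t`, is a Frobenius algebra. -/
theorem bicharacter_twist_isFrobenius_of_degree_zero
    {k A B F G : Type*} [Field k]
    [AddCommGroup A] [Module k A] [AddCommGroup B] [Module k B]
    [AddCommGroup F] [AddCommGroup G] [DecidableEq F] [DecidableEq G]
    (𝒜 : F → Submodule k A) (ℬ : G → Submodule k B)
    [DirectSum.Decomposition 𝒜] [DirectSum.Decomposition ℬ]
    (mulA : A ⊗[k] A →ₗ[k] A) (unitA : k →ₗ[k] A)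
    (comulA : A →ₗ[k] A ⊗[k] A) (counitA : A →ₗ[k] k)
    (mulB : B ⊗[k] B →ₗ[k] B) (unitB : k →ₗ[k] B)
    (comulB : B →ₗ[k] B ⊗[k] B) (counitB : B →ₗ[k] k)
    (hA : IsFrobenius k mulA unitA comulA counitA)
    (hB : IsFrobenius k mulB unitB comulB counitB)
    (hΔA : ComulGradedOfDegree k 𝒜 comulA 0)
    (hΔB : ComulGradedOfDegree k ℬ comulB 0)
    (t : (F ⊗[ℤ] G) →+ Additive kˣ)
    (τ : B ⊗[k] A ≃ₗ[k] A ⊗[k] B)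
    (hτ : ∀ (f : F) (g : G), ∀ a ∈ 𝒜 f, ∀ b ∈ ℬ g,
      τ (b ⊗ₜ[k] a) = ((Additive.toMul (t (f ⊗ₜ[ℤ] g)) : kˣ) : k) • (a ⊗ₜ[k] b))
    (hτtwist : IsTwisting k mulA unitA mulB unitB τ.toLinearMap) :
    IsFrobenius k (tMul k mulA mulB τ.toLinearMap) (tUnit k unitA unitB)
        (tComul k comulA comulB τ.symm.toLinearMap) (tCounit k counitA counitB) :=
  bicharacter_twist_isFrobenius_of_degree_zero_general
    (DirectSum.Decomposition.isInternal 𝒜).submodule_iSup_eq_top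
    (DirectSum.Decomposition.isInternal ℬ).submodule_iSup_eq_top
    hA hB hΔA hΔB (by simp) (by simp) hτ hτtwist
end
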